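/- arXiv:1711.02514 — 2 statements merged into one kernel-verified Lean document; each statement's English description precedes it below -/
import Mathlib

section
/- Let m ≥ 4, let P be a centrally symmetric convex 2m-gon, and let P + X be a k-fold translative tiling of the plane. Then for every vertex v ∈ V + X, the number of indices i with v ∈ int(P) + x_i (counted with multiplicity) is at most k − ⌈(m−1)/2⌉; equivalently, φ(v) = k − #{i : v ∈ int(P) + x_i} ≥ ⌈(m−1)/2⌉. -/
open Pointwise

/-- `K + X` is a `k`-fold translative tiling of the plane: the translate multiset
`(x i)` is discrete, every point of the plane belongs to at least `k` of the translates
`K + x i`, and every point belongs to at most `k` of the translates `interior K + x i`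
(multiplicity counted over the index set). -/
def IsKFoldTranslativeTiling {ι : Type} (K : Set (ℝ × ℝ)) (x : ι → ℝ × ℝ) (k : ℕ) : Prop :=
  (∀ R : ℝ, {i : ι | ‖x i‖ ≤ R}.Finite) ∧
  (∀ p : ℝ × ℝ, ∃ s : Finset ι, k ≤ s.card ∧ ∀ i ∈ s, p - x i ∈ K) ∧
  (∀ p : ℝ × ℝ, ∀ s : Finset ι, (∀ i ∈ s, p - x i ∈ interior K) → s.card ≤ k)

/-- `P` is a (two-dimensional) convex polygon whose vertex set is the finite set `V`:
`P` is the convex hull of `V`, every element of `V` is an extreme point of `P`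
(so `V` is exactly the vertex set), and `P` has nonempty interior. -/
def IsConvexPolygon (P : Set (ℝ × ℝ)) (V : Finset (ℝ × ℝ)) : Prop :=
  P = convexHull ℝ (V : Set (ℝ × ℝ)) ∧
  (∀ v ∈ V, v ∈ Set.extremePoints ℝ P) ∧
  (interior P).Nonempty

/-- `P` is symmetric about some point `c`. -/
def IsCentrallySymmetric (P : Set (ℝ × ℝ)) : Prop :=
  ∃ c : ℝ × ℝ, ∀ p ∈ P, 2 • c - p ∈ P

/-- The segment `[a, b]` is an edge of the convex polygon `P` with vertex set `V`. -/
def IsEdge (P : Set (ℝ × ℝ)) (V : Finset (ℝ × ℝ)) (a b : ℝ × ℝ) : Prop :=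
  a ∈ V ∧ b ∈ V ∧ a ≠ b ∧ segment ℝ a b ⊆ frontier P

open Filter Topology in
/-- Every vertex of a polygon is strictly exposed. -/
lemma vertex_exposed (P : Set (ℝ × ℝ)) (V : Finset (ℝ × ℝ)) (hP : IsConvexPolygon P V)
    (hc : 2 ≤ V.card) (w : ℝ × ℝ) (hw : w ∈ V) :
    ∃ f : (ℝ × ℝ) →L[ℝ] ℝ, ∀ p ∈ P, p ≠ w → f p < f w := by
  obtain ⟨hPV, hext, -⟩ := hP
  have hconv : Convex ℝ P := hPV ▸ convex_convexHull ℝ _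
  have hd : Convex ℝ (P \ {w}) := (hconv.mem_extremePoints_iff_convex_diff.1 (hext w hw)).2
  have hsub : convexHull ℝ ((V.erase w : Finset (ℝ × ℝ)) : Set (ℝ × ℝ)) ⊆ P \ {w} := by
    apply convexHull_min _ hd
    intro q hq
    simp only [Finset.coe_erase, Set.mem_diff, Finset.mem_coe] at hq
    exact ⟨(hext q hq.1).1, hq.2⟩
  have hw' : w ∉ convexHull ℝ ((V.erase w : Finset (ℝ × ℝ)) : Set (ℝ × ℝ)) :=
    fun h => (hsub h).2 rfl
  have hcl : IsClosed (convexHull ℝ ((V.erase w : Finset (ℝ × ℝ)) : Set (ℝ × ℝ))) :=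
    (Finset.finite_toSet _).isClosed_convexHull (𝕜 := ℝ)
  obtain ⟨f, c, h1, h2⟩ := geometric_hahn_banach_closed_point (convex_convexHull ℝ _) hcl hw'
  refine ⟨f, fun p hp hpw => ?_⟩
  have hne : ((V.erase w : Finset (ℝ × ℝ)) : Set (ℝ × ℝ)).Nonempty := by
    rw [Finset.coe_nonempty, ← Finset.card_pos, Finset.card_erase_of_mem hw]; omega
  rw [hPV, ← Finset.insert_erase hw, Finset.coe_insert, convexHull_insert hne,
    mem_convexJoin] at hp
  obtain ⟨a, ha, q, hq, hp⟩ := hp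
  rw [Set.mem_singleton_iff] at ha
  subst ha
  obtain ⟨s, t, hs, ht, hst, rfl⟩ := hp
  have htp : 0 < t := by
    rcases ht.lt_or_eq with h | h
    · exact h
    · exfalso; apply hpw
      rw [← h] at hst ⊢
      have : s = 1 := by linarith
      simp [this]
  have h3 := h1 q hq
  simp only [map_add, map_smul, smul_eq_mul]
  have hs' : s = 1 - t := by linarith
  subst hs'
  nlinarith

/-- Two points on the same level line differ by a multiple of the direction of that line. -/
lemma level_line (f : (ℝ × ℝ) →L[ℝ] ℝ) (hf : f ≠ 0) :
    ∃ u : ℝ × ℝ, u ≠ 0 ∧ f u = 0 ∧ ∀ y z, f y = f z → ∃ s : ℝ, z = y + s • u := by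
  have key : ∀ p : ℝ × ℝ, f p = p.1 * f (1, 0) + p.2 * f (0, 1) := by
    intro p
    have : p = p.1 • ((1, 0) : ℝ × ℝ) + p.2 • ((0, 1) : ℝ × ℝ) := by ext <;> simp
    conv_lhs => rw [this]
    simp only [map_add, map_smul, smul_eq_mul]
  set a := f (1, 0) with ha
  set b := f (0, 1) with hb
  have hab : a ^ 2 + b ^ 2 ≠ 0 := by
    intro h
    have h1 : a = 0 := by nlinarith [sq_nonneg a, sq_nonneg b]
    have h2 : b = 0 := by nlinarith [sq_nonneg a, sq_nonneg b]
    apply hf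
    ext p <;> simp [← ha, ← hb, h1, h2]
  refine ⟨(-b, a), ?_, ?_, ?_⟩
  · intro h
    simp only [Prod.mk_eq_zero, neg_eq_zero] at h
    apply hab; rw [h.1, h.2]; norm_num
  · rw [key]; ring
  · intro y z h
    rw [key y, key z] at h
    refine ⟨(-b * (z.1 - y.1) + a * (z.2 - y.2)) / (a ^ 2 + b ^ 2), ?_⟩
    ext
    · simp only [Prod.fst_add, Prod.smul_fst, smul_eq_mul]
      field_simp
      linear_combination (-a) * h
    · simp only [Prod.snd_add, Prod.smul_snd, smul_eq_mul]
      field_simp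
      linear_combination (-b) * h

open Filter Topology in
/-- Behaviour near a boundary point whose level is not extremal. -/
lemma boundary_cross (P : Set (ℝ × ℝ)) (hconv : Convex ℝ P) (hint : (interior P).Nonempty)
    (f : (ℝ × ℝ) →L[ℝ] ℝ) (u : ℝ × ℝ)
    (hu : ∀ y z, f y = f z → ∃ s : ℝ, z = y + s • u)
    (y w w' : ℝ × ℝ) (hy : y ∈ P) (hyi : y ∉ interior P) (hw : w ∈ P) (hw' : w' ∈ P)
    (h1 : f y < f w) (h2 : f w' < f y) :
    ∀ᶠ t in 𝓝[>] (0 : ℝ), (y + t • u ∈ interior P ∧ y - t • u ∉ P) ∨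
      (y - t • u ∈ interior P ∧ y + t • u ∉ P) := by
  have hdense : P ⊆ closure (interior P) := by
    rw [hconv.closure_interior_eq_closure_of_nonempty_interior hint]; exact subset_closure
  obtain ⟨z1, hz1, hz1i⟩ := mem_closure_iff.1 (hdense hw) {p | f y < f p}
    (isOpen_lt continuous_const f.continuous) h1
  obtain ⟨z2, hz2, hz2i⟩ := mem_closure_iff.1 (hdense hw') {p | f p < f y}
    (isOpen_lt f.continuous continuous_const) h2
  simp only [Set.mem_setOf_eq] at hz1 hz2
  obtain ⟨z, hzi, hz⟩ : ∃ z ∈ interior P, f z = f y := by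
    have := (hconv.interior.isPreconnected).intermediate_value hz2i hz1i
      f.continuous.continuousOn
    obtain ⟨z, hz, h⟩ := this ⟨hz2.le, hz1.le⟩
    exact ⟨z, hz, h⟩
  obtain ⟨s, rfl⟩ := hu y z hz.symm
  -- general facts
  have hin : ∀ r : ℝ, 0 < r → r < 1 → y + (r * s) • u ∈ interior P := by
    intro r hr hr1
    apply hconv.openSegment_self_interior_subset_interior hy hzi
    refine ⟨1 - r, r, by linarith, hr, by ring, ?_⟩
    module
  have hout : ∀ r : ℝ, 0 < r → y - (r * s) • u ∉ P := by
    intro r hr hmem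
    apply hyi
    apply hconv.openSegment_self_interior_subset_interior hmem hzi
    refine ⟨1 / (1 + r), r / (1 + r), by positivity, by positivity, by field_simp, ?_⟩
    have e : y = (1 / (1 + r) + r / (1 + r)) • y +
      ((r / (1 + r)) * s - (1 / (1 + r)) * r * s) • u := by
      have e1 : 1 / (1 + r) + r / (1 + r) = 1 := by field_simp
      have e2 : (r / (1 + r)) * s - (1 / (1 + r)) * r * s = 0 := by ring
      rw [e1, e2]; simp
    conv_rhs => rw [e]
    module
  have hs : s ≠ 0 := by
    rintro rfl; apply hyi; simpa using hzi
  have hev : ∀ᶠ t in 𝓝[>] (0 : ℝ), t < |s| :=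
    (eventually_lt_nhds (abs_pos.2 hs)).filter_mono nhdsWithin_le_nhds
  filter_upwards [hev, self_mem_nhdsWithin] with t ht ht0
  have ht0 : 0 < t := ht0
  rcases lt_or_gt_of_ne hs with h | h
  · right
    rw [abs_of_neg h] at ht
    have hr : 0 < t / (-s) := div_pos ht0 (by linarith)
    have hr1 : t / (-s) < 1 := (div_lt_one (by linarith)).2 ht
    have e : t / (-s) * s = -t := by field_simp
    have := hin _ hr hr1
    have h' := hout _ hr
    rw [e] at this h'
    simp only [neg_smul, sub_neg_eq_add, ← sub_eq_add_neg] at this h'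
    exact ⟨this, h'⟩
  · left
    rw [abs_of_pos h] at ht
    have hr : 0 < t / s := div_pos ht0 h
    have hr1 : t / s < 1 := (div_lt_one h).2 ht
    have e : t / s * s = t := by field_simp
    have := hin _ hr hr1
    have h' := hout _ hr
    rw [e] at this h'
    exact ⟨this, h'⟩

open Filter Topology in
lemma eventually_line {U : Set (ℝ × ℝ)} (hU : IsOpen U) {y : ℝ × ℝ} (hy : y ∈ U) (u : ℝ × ℝ) :
    ∀ᶠ t in 𝓝[>] (0 : ℝ), y + t • u ∈ U ∧ y - t • u ∈ U := by
  have c1 : Continuous fun t : ℝ => y + t • u := by fun_prop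
  have c2 : Continuous fun t : ℝ => y - t • u := by fun_prop
  have e1 := c1.continuousAt.eventually_mem (x := 0) (s := U) (by simpa using hU.mem_nhds hy)
  have e2 := c2.continuousAt.eventually_mem (x := 0) (s := U) (by simpa using hU.mem_nhds hy)
  exact (e1.and e2).filter_mono nhdsWithin_le_nhds

open Filter Topology Classical in
/-- The main counting identity. -/
lemma count_identity (P : Set (ℝ × ℝ)) (hconv : Convex ℝ P) (hcomp : IsCompact P)
    (hint : (interior P).Nonempty)
    (k : ℕ) (ι : Type) (x : ι → ℝ × ℝ) (htile : IsKFoldTranslativeTiling P x k)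
    (v : ℝ × ℝ) (T : Finset ι) (hT : ∀ i, i ∈ T ↔ v - x i ∈ P)
    (f : (ℝ × ℝ) →L[ℝ] ℝ) (w w' : ℝ × ℝ) (hw : w ∈ P) (hw' : w' ∈ P) (hww : f w' < f w)
    (hmax : ∀ p ∈ P, p ≠ w → f p < f w) (hmin : ∀ p ∈ P, p ≠ w' → f w' < f p) :
    2 * k + ((T.filter fun i => v - x i = w).card + (T.filter fun i => v - x i = w').card)
      = (T.filter fun i => v - x i ∈ interior P).card + T.card := by
  obtain ⟨hfin, hcov, hpack⟩ := htile
  have hf : f ≠ 0 := by rintro rfl; simp at hww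
  obtain ⟨u, hu0, hfu, hu⟩ := level_line f hf
  obtain ⟨R, hR⟩ := hcomp.isBounded.exists_norm_le
  have hne : w ≠ w' := by rintro rfl; exact lt_irrefl _ hww
  -- boundary extreme points leave `P`
  have hleave : ∀ (y : ℝ × ℝ) (t : ℝ), 0 < t → (y = w ∨ y = w') → y + t • u ∉ P ∧ y - t • u ∉ P := by
    intro y t ht hy
    have n1 : y + t • u ≠ y := by simp [hu0, ht.ne']
    have n2 : y - t • u ≠ y := by simp [hu0, ht.ne']
    have f1 : f (y + t • u) = f y := by simp [hfu]
    have f2 : f (y - t • u) = f y := by simp [hfu]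
    rcases hy with rfl | rfl
    · exact ⟨fun h => absurd (hmax _ h n1) (by rw [f1]; exact lt_irrefl _),
        fun h => absurd (hmax _ h n2) (by rw [f2]; exact lt_irrefl _)⟩
    · exact ⟨fun h => absurd (hmin _ h n1) (by rw [f1]; exact lt_irrefl _),
        fun h => absurd (hmin _ h n2) (by rw [f2]; exact lt_irrefl _)⟩
  have hnoint : ∀ y, (y = w ∨ y = w') → y ∉ interior P := by
    intro y hy hyi
    have h1 := eventually_line isOpen_interior hyi u
    obtain ⟨t, ht, ht0⟩ := (h1.and self_mem_nhdsWithin).exists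
    exact (hleave y t ht0 hy).1 (interior_subset ht.1)
  -- locality
  have hS : {i : ι | ‖x i‖ ≤ ‖v‖ + ‖u‖ + R}.Finite := hfin _
  have hlocS : ∀ᶠ t in 𝓝[>] (0 : ℝ), ∀ i ∈ {i : ι | ‖x i‖ ≤ ‖v‖ + ‖u‖ + R}, i ∉ T →
      (v - x i) + t • u ∉ P ∧ (v - x i) - t • u ∉ P := by
    rw [hS.eventually_all]
    intro i _
    by_cases hi : i ∈ T
    · exact Eventually.of_forall fun t h => absurd hi h
    · have : v - x i ∈ Pᶜ := fun h => hi ((hT i).2 h)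
      filter_upwards [eventually_line hcomp.isClosed.isOpen_compl this u] with t ht _
      exact ht
  have hlt1 : ∀ᶠ t in 𝓝[>] (0 : ℝ), t < 1 :=
    (eventually_lt_nhds one_pos).filter_mono nhdsWithin_le_nhds
  have hcase : ∀ᶠ t in 𝓝[>] (0 : ℝ), ∀ i ∈ T,
      ((v - x i ∈ interior P) ∧ (v - x i) + t • u ∈ interior P ∧
          (v - x i) - t • u ∈ interior P) ∨
      ((v - x i ∉ interior P ∧ v - x i ≠ w ∧ v - x i ≠ w') ∧
        (((v - x i) + t • u ∈ interior P ∧ (v - x i) - t • u ∉ P) ∨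
      ((v - x i) - t • u ∈ interior P ∧ (v - x i) + t • u ∉ P))) ∨
      ((v - x i ∉ interior P ∧ (v - x i = w ∨ v - x i = w')) ∧
        (v - x i) + t • u ∉ P ∧ (v - x i) - t • u ∉ P) := by
    rw [Filter.eventually_all_finset]
    intro i hi
    have hiP := (hT i).1 hi
    by_cases hI : v - x i ∈ interior P
    · filter_upwards [eventually_line isOpen_interior hI u] with t ht
      exact Or.inl ⟨hI, ht⟩
    by_cases hE : v - x i = w ∨ v - x i = w'
    · filter_upwards [self_mem_nhdsWithin] with t ht
      exact Or.inr (Or.inr ⟨⟨hI, hE⟩, hleave _ t ht hE⟩)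
    · push Not at hE
      filter_upwards [boundary_cross P hconv hint f u hu (v - x i) w w' hiP hI hw hw'
        (hmax _ hiP hE.1) (hmin _ hiP hE.2)] with t ht
      exact Or.inr (Or.inl ⟨⟨hI, hE⟩, ht⟩)
  obtain ⟨t, ⟨⟨⟨hloc, ht1⟩, hc⟩, ht0⟩⟩ :=
    (((hlocS.and hlt1).and hcase).and self_mem_nhdsWithin).exists
  have ht0 : 0 < t := ht0
  have htu : ‖t • u‖ ≤ ‖u‖ := by
    rw [norm_smul, Real.norm_of_nonneg ht0.le]
    nlinarith [norm_nonneg u]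
  have hlocal : ∀ i, ((v - x i) + t • u ∈ P ∨ (v - x i) - t • u ∈ P) → i ∈ T := by
    intro i h
    by_contra hi
    have hmem : ‖x i‖ ≤ ‖v‖ + ‖u‖ + R := by
      rcases h with h | h
      · have h2 := hR _ h
        calc ‖x i‖ = ‖v + t • u - ((v - x i) + t • u)‖ := by congr 1; abel
          _ ≤ ‖v + t • u‖ + ‖(v - x i) + t • u‖ := norm_sub_le _ _
          _ ≤ ‖v‖ + ‖t • u‖ + ‖(v - x i) + t • u‖ := by gcongr; exact norm_add_le _ _
          _ ≤ _ := by gcongr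
      · have h2 := hR _ h
        calc ‖x i‖ = ‖v - t • u - ((v - x i) - t • u)‖ := by congr 1; abel
          _ ≤ ‖v - t • u‖ + ‖(v - x i) - t • u‖ := norm_sub_le _ _
          _ ≤ ‖v‖ + ‖t • u‖ + ‖(v - x i) - t • u‖ := by gcongr; exact norm_sub_le _ _
          _ ≤ _ := by gcongr
    have := hloc i hmem hi
    tauto
  have hk1 : (T.filter fun i => (v - x i) + t • u ∈ interior P).card = k := by
    apply le_antisymm
    · apply hpack (v + t • u)
      intro i hi
      have := (Finset.mem_filter.1 hi).2
      rwa [sub_add_eq_add_sub] at this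
    · obtain ⟨s, hs, hsP⟩ := hcov (v + t • u)
      refine hs.trans (Finset.card_le_card fun i hi => ?_)
      have h1 : (v - x i) + t • u ∈ P := by rw [sub_add_eq_add_sub]; exact hsP i hi
      have hiT := hlocal i (Or.inl h1)
      rw [Finset.mem_filter]
      refine ⟨hiT, ?_⟩
      have := hc i hiT
      tauto
  have hk2 : (T.filter fun i => (v - x i) - t • u ∈ interior P).card = k := by
    apply le_antisymm
    · apply hpack (v - t • u)
      intro i hi
      have := (Finset.mem_filter.1 hi).2
      rwa [sub_right_comm] at this
    · obtain ⟨s, hs, hsP⟩ := hcov (v - t • u)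
      refine hs.trans (Finset.card_le_card fun i hi => ?_)
      have h1 : (v - x i) - t • u ∈ P := by rw [sub_right_comm]; exact hsP i hi
      have hiT := hlocal i (Or.inr h1)
      rw [Finset.mem_filter]
      refine ⟨hiT, ?_⟩
      have := hc i hiT
      tauto
  have h2k : 2 * k = (T.filter fun i => (v - x i) + t • u ∈ interior P).card +
      (T.filter fun i => (v - x i) - t • u ∈ interior P).card := by rw [hk1, hk2]; ring
  rw [h2k]
  simp only [Finset.card_filter]
  rw [Finset.card_eq_sum_ones, ← Finset.sum_add_distrib, ← Finset.sum_add_distrib,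
    ← Finset.sum_add_distrib, ← Finset.sum_add_distrib]
  apply Finset.sum_congr rfl
  intro i hi
  have hsubP : ∀ p, p ∉ P → p ∉ interior P := fun p hp h => hp (interior_subset h)
  rcases hc i hi with ⟨a, b, c⟩ | ⟨⟨a, b, c⟩, ⟨d, e⟩ | ⟨d, e⟩⟩ | ⟨⟨a, b⟩, c, d⟩
  · have n1 : v - x i ≠ w := fun h => hnoint _ (Or.inl h) a
    have n2 : v - x i ≠ w' := fun h => hnoint _ (Or.inr h) a
    simp [a, b, c, n1, n2]
  · simp [a, b, c, d, hsubP _ e]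
  · simp [a, b, c, d, hsubP _ e]
  · rcases b with b | b
    · simp only [a, hsubP _ c, hsubP _ d, if_false]
      simp [b, hne]
    · simp only [a, hsubP _ c, hsubP _ d, if_false]
      simp [b, hne.symm]

/-- Let `m ≥ 4`, let `P` be a centrally symmetric convex `2m`-gon and let `P + X` be a
`k`-fold translative tiling of the plane. Then for every vertex `v ∈ V + X` the number
of indices `i` with `v ∈ int(P) + x i` is at most `k - ⌈(m-1)/2⌉`; equivalently
`φ(v) ≥ ⌈(m-1)/2⌉`. -/
theorem interior_count_upper_bound (m : ℕ) (hm : 4 ≤ m)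
    (P : Set (ℝ × ℝ)) (V : Finset (ℝ × ℝ))
    (hP : IsConvexPolygon P V) (hV : V.card = 2 * m) (hsym : IsCentrallySymmetric P)
    (k : ℕ) (hk : 0 < k) (ι : Type) (x : ι → ℝ × ℝ)
    (htile : IsKFoldTranslativeTiling P x k)
    (v : ℝ × ℝ) (j : ι) (hv : v - x j ∈ V) :
    {i : ι | v - x i ∈ interior P}.ncard + (m - 1 + 1) / 2 ≤ k := by
  classical
  obtain ⟨c, hc⟩ := hsym
  have hP' := hP
  obtain ⟨hPV, hext, hint⟩ := hP
  have hconv : Convex ℝ P := hPV ▸ convex_convexHull ℝ _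
  have hcomp : IsCompact P := by
    rw [hPV]; exact V.finite_toSet.isCompact_convexHull (𝕜 := ℝ)
  obtain ⟨R, hR⟩ := hcomp.isBounded.exists_norm_le
  have hTfin : {i : ι | v - x i ∈ P}.Finite := by
    apply (htile.1 (‖v‖ + R)).subset
    intro i hi
    have := hR _ hi
    calc ‖x i‖ = ‖v - (v - x i)‖ := by congr 1; abel
      _ ≤ ‖v‖ + ‖v - x i‖ := norm_sub_le _ _
      _ ≤ _ := by gcongr
  set T := hTfin.toFinset with hTdef
  have hT : ∀ i, i ∈ T ↔ v - x i ∈ P := by intro i; simp [hTdef]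
  set I := (T.filter fun i => v - x i ∈ interior P).card with hI
  have hIn : {i : ι | v - x i ∈ interior P}.ncard = I := by
    rw [hI, ← Set.ncard_coe_finset]
    congr 1
    ext i
    simp only [Set.mem_setOf_eq, Finset.coe_filter, hT]
    exact ⟨fun h => ⟨interior_subset h, h⟩, fun h => h.2⟩
  rw [hIn]
  let a : ℝ × ℝ → ℕ := fun w => (T.filter fun i => v - x i = w).card
  have hmain : ∀ w ∈ V, 2 • c - w ∈ V ∧ w ∉ interior P ∧
      2 * k + (a w + a (2 • c - w)) = I + T.card := by
    intro w hw
    obtain ⟨f, hf⟩ := vertex_exposed P V hP' (by omega) w hw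
    have hwP : w ∈ P := (hext w hw).1
    have hw'P := hc w hwP
    have hmin : ∀ p ∈ P, p ≠ 2 • c - w → f (2 • c - w) < f p := by
      intro p hp hpw
      have h1 := hf _ (hc p hp) (by
        intro h; apply hpw; rw [← h]; abel)
      simp only [map_sub] at h1 ⊢
      linarith
    have hww : f (2 • c - w) < f w := by
      obtain ⟨q, hq, hqw⟩ := Finset.exists_mem_ne (s := V) (by omega) w
      have hqP := (hext q hq).1
      have h1 := hf q hqP hqw
      by_cases h : q = 2 • c - w
      · rw [← h]; exact h1
      · exact (hmin q hqP h).trans h1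
    refine ⟨?_, ?_, count_identity P hconv hcomp hint k ι x htile v T hT f w (2 • c - w)
      hwP hw'P hww hf hmin⟩
    · by_contra hn
      have hsub : P ⊆ {p | f (2 • c - w) < f p} := by
        rw [hPV]
        apply convexHull_min
        · intro q hq
          exact hmin q (hext q hq).1 (by rintro rfl; exact hn hq)
        · exact convex_halfSpace_gt f.isLinear _
      have hlt : f (2 • c - w) < f (2 • c - w) := hsub hw'P
      exact lt_irrefl _ hlt
    · intro hwi
      have hne : f ≠ 0 := by rintro rfl; simp at hww
      obtain ⟨u, hu0, hfu, -⟩ := level_line f hne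
      obtain ⟨t, ht, ht0⟩ :=
        ((eventually_line isOpen_interior hwi u).and self_mem_nhdsWithin).exists
      have ht0 : 0 < t := ht0
      have := hf _ (interior_subset ht.1) (by simp [hu0, ht0.ne'])
      simp [hfu] at this
  -- all vertices at `v`
  have hsum : I + ∑ w ∈ V, a w ≤ T.card := by
    have h1 : ∑ w ∈ V, a w = (T.filter fun i => v - x i ∈ V).card := by
      rw [Finset.card_eq_sum_card_fiberwise (f := fun i => v - x i) (t := V)]
      · apply Finset.sum_congr rfl
        intro w hw
        simp only [a, Finset.filter_filter]
        congr 1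
        apply Finset.filter_congr
        intro i _
        exact ⟨fun h => ⟨h ▸ hw, h⟩, fun h => h.2⟩
      · intro i hi
        simpa using (Finset.mem_filter.1 hi).2
    rw [h1, hI, ← Finset.card_union_of_disjoint]
    · apply Finset.card_le_card
      exact Finset.union_subset (Finset.filter_subset _ _) (Finset.filter_subset _ _)
    · rw [Finset.disjoint_filter]
      intro i _ h1 h2
      exact (hmain _ h2).2.1 h1
  have hrefl : ∑ w ∈ V, a (2 • c - w) = ∑ w ∈ V, a w := by
    apply Finset.sum_bij' (fun w _ => 2 • c - w) (fun w _ => 2 • c - w)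
    · intro w _; abel
    · intro w _; abel
    · intro w _; rfl
    · intro w hw; exact (hmain w hw).1
    · intro w hw; exact (hmain w hw).1
  have h0 := (hmain _ hv).2.2
  set κ := a (v - x j) + a (2 • c - (v - x j)) with hκ
  have hκ1 : 1 ≤ κ := by
    have : 0 < a (v - x j) := by
      apply Finset.card_pos.2
      exact ⟨j, Finset.mem_filter.2 ⟨(hT j).2 (hext _ hv).1, rfl⟩⟩
    omega
  have h2 : 2 * ∑ w ∈ V, a w = 2 * m * κ := by
    rw [two_mul]
    nth_rewrite 2 [← hrefl]
    rw [← Finset.sum_add_distrib, Finset.sum_congr rfl (g := fun _ => κ), Finset.sum_const, hV,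
      smul_eq_mul]
    intro w hw
    have := (hmain w hw).2.2
    omega
  have h3 : ∑ w ∈ V, a w = m * κ := by nlinarith
  rw [h3] at hsum
  have h4 : m + κ ≤ m * κ + 1 := by
    obtain ⟨d, hd⟩ := Nat.exists_eq_add_of_le hκ1
    obtain ⟨e, he⟩ := Nat.exists_eq_add_of_le hm
    rw [hd, he]; nlinarith
  omega
end

section
/- Let P be a centrally symmetric convex octagon (a convex polygon with exactly 8 vertices, symmetric about a point). If P admits a k-fold translative tiling of the plane for some positive integer k, then k ≥ 5; that is, τ(P) ≥ 5. -/
open Pointwise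

/-! arithmetic -/
theorem shiftEq {h w : Fin 8 → ℕ} {F k : ℕ}
    (E : ∀ j, F + h j + h (j+1) + h (j+2) + h (j+3) + w (j+1) + w (j+2) + w (j+3) = k) (m : Fin 8) :
    ∀ j, F + h (m+j) + h (m+(j+1)) + h (m+(j+2)) + h (m+(j+3)) + w (m+(j+1)) + w (m+(j+2))
      + w (m+(j+3)) = k := by
  intro j
  have := E (m+j)
  simpa only [add_assoc] using this

theorem expandEq {h w : Fin 8 → ℕ} {F k : ℕ}
    (E : ∀ j, F + h j + h (j+1) + h (j+2) + h (j+3) + w (j+1) + w (j+2) + w (j+3) = k) :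
    (F + h 0 + h 1 + h 2 + h 3 + w 1 + w 2 + w 3 = k) ∧
    (F + h 1 + h 2 + h 3 + h 4 + w 2 + w 3 + w 4 = k) ∧
    (F + h 2 + h 3 + h 4 + h 5 + w 3 + w 4 + w 5 = k) ∧
    (F + h 3 + h 4 + h 5 + h 6 + w 4 + w 5 + w 6 = k) ∧
    (F + h 4 + h 5 + h 6 + h 7 + w 5 + w 6 + w 7 = k) ∧
    (F + h 5 + h 6 + h 7 + h 0 + w 6 + w 7 + w 0 = k) ∧
    (F + h 6 + h 7 + h 0 + h 1 + w 7 + w 0 + w 1 = k) ∧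
    (F + h 7 + h 0 + h 1 + h 2 + w 0 + w 1 + w 2 = k) :=
  ⟨E 0, E 1, E 2, E 3, E 4, E 5, E 6, E 7⟩

theorem arithL3 {h w : Fin 8 → ℕ} {F k : ℕ}
    (E : ∀ j, F + h j + h (j+1) + h (j+2) + h (j+3) + w (j+1) + w (j+2) + w (j+3) = k)
    (m : Fin 8) (hm : 0 < w (m+1)) : 0 < h (m+2) + w (m+2) + w (m+3) := by
  have E' := expandEq (h := fun j => h (m+j)) (w := fun j => w (m+j)) (shiftEq E m)
  omega

theorem arithL3' {h w : Fin 8 → ℕ} {F k : ℕ}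
    (E : ∀ j, F + h j + h (j+1) + h (j+2) + h (j+3) + w (j+1) + w (j+2) + w (j+3) = k)
    (m : Fin 8) (hm : 0 < w (m+0)) : 0 < h (m+6) + w (m+6) + w (m+7) := by
  have E' := expandEq (h := fun j => h (m+j)) (w := fun j => w (m+j)) (shiftEq E m)
  omega

theorem sumW {h w : Fin 8 → ℕ} {F k : ℕ}
    (E : ∀ j, F + h j + h (j+1) + h (j+2) + h (j+3) + w (j+1) + w (j+2) + w (j+3) = k)
    (hw : ∃ i, 0 < w i) : 0 < w 0 + w 4 ∧ w 1 + w 5 = w 0 + w 4 ∧ w 2 + w 6 = w 0 + w 4 ∧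
      w 3 + w 7 = w 0 + w 4 := by
  have E' := expandEq E
  have : 0 < w 0 + w 1 + w 2 + w 3 + w 4 + w 5 + w 6 + w 7 := by
    obtain ⟨i, hi⟩ := hw
    fin_cases i <;> simp at hi <;> omega
  omega

theorem arithL0 {h w : Fin 8 → ℕ} {F k : ℕ}
    (E : ∀ j, F + h j + h (j+1) + h (j+2) + h (j+3) + w (j+1) + w (j+2) + w (j+3) = k)
    (hw : ∃ i, 0 < w i) : F + 2 ≤ k := by
  have E' := expandEq E
  have := sumW E hw
  omega

theorem arithL2 {h w : Fin 8 → ℕ} {F k : ℕ}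
    (E : ∀ j, F + h j + h (j+1) + h (j+2) + h (j+3) + w (j+1) + w (j+2) + w (j+3) = k)
    (hw : ∃ i, 0 < w i) (hF : F + 2 = k) : ∃ m, 0 < h m := by
  have E' := expandEq E
  have := sumW E hw
  by_contra hc
  push Not at hc
  have hz : ∀ j, h j = 0 := fun j => Nat.le_zero.mp (hc j)
  simp only [hz] at E'
  clear hc hz E hw this
  omega

theorem arithL2' {h w : Fin 8 → ℕ} {F k : ℕ}
    (E : ∀ j, F + h j + h (j+1) + h (j+2) + h (j+3) + w (j+1) + w (j+2) + w (j+3) = k)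
    (hw : ∃ i, 0 < w i) (hF : F + 2 = k) (m : Fin 8) (hm : 0 < h (m+0)) :
    0 < w (m+4) ∧ 0 < w (m+7) ∧ 0 < w (m+2) ∧ 0 < w (m+5) := by
  have hE := shiftEq E m
  have E' := expandEq (h := fun j => h (m+j)) (w := fun j => w (m+j)) hE
  have hw' : ∃ i, 0 < w (m+i) := by
    obtain ⟨i, hi⟩ := hw
    exact ⟨i - m, by simpa using hi⟩
  have := sumW (h := fun j => h (m+j)) (w := fun j => w (m+j)) hE hw'
  refine ⟨?_, ?_, ?_, ?_⟩ <;> omega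

theorem arithL1 {h w : Fin 8 → ℕ} {F k : ℕ}
    (E : ∀ j, F + h j + h (j+1) + h (j+2) + h (j+3) + w (j+1) + w (j+2) + w (j+3) = k)
    (hw : ∃ i, 0 < w i) (hF : F + 3 ≤ k) :
    ∃ i, 0 < w i ∧ 2 ≤ h (i+5) + h (i+6) + h (i+7) + w (i+6) + w (i+7) := by
  have E' := expandEq E
  have hs := sumW E hw
  by_contra hc
  push Not at hc
  have h0 : 0 < w 0 → h 5 + h 6 + h 7 + w 6 + w 7 < 2 := hc 0
  have h1 : 0 < w 1 → h 6 + h 7 + h 0 + w 7 + w 0 < 2 := hc 1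
  have h2 : 0 < w 2 → h 7 + h 0 + h 1 + w 0 + w 1 < 2 := hc 2
  have h3 : 0 < w 3 → h 0 + h 1 + h 2 + w 1 + w 2 < 2 := hc 3
  have h4 : 0 < w 4 → h 1 + h 2 + h 3 + w 2 + w 3 < 2 := hc 4
  have h5 : 0 < w 5 → h 2 + h 3 + h 4 + w 3 + w 4 < 2 := hc 5
  have h6 : 0 < w 6 → h 3 + h 4 + h 5 + w 4 + w 5 < 2 := hc 6
  have h7 : 0 < w 7 → h 4 + h 5 + h 6 + w 5 + w 6 < 2 := hc 7
  clear hc E hw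
  have c0 : 0 < w 0 ∨ 0 < w 4 := by omega
  have c1 : 0 < w 1 ∨ 0 < w 5 := by omega
  have c2 : 0 < w 2 ∨ 0 < w 6 := by omega
  have c3 : 0 < w 3 ∨ 0 < w 7 := by omega
  rcases c0 with c0 | c0 <;> rcases c1 with c1 | c1 <;> rcases c2 with c2 | c2 <;>
    rcases c3 with c3 | c3 <;> simp only [c0, c1, c2, c3, forall_const] at * <;> omega

/-! geometry of an octagon -/
def cr (a b : ℝ × ℝ) : ℝ := a.1 * b.2 - a.2 * b.1

theorem cr_neg_right (a b : ℝ × ℝ) : cr a (-b) = - cr a b := by simp [cr]; ring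
theorem cr_neg_left (a b : ℝ × ℝ) : cr (-a) b = - cr a b := by simp [cr]; ring
theorem cr_add_right (a b c : ℝ × ℝ) : cr a (b + c) = cr a b + cr a c := by simp [cr]; ring
theorem cr_sub_right (a b c : ℝ × ℝ) : cr a (b - c) = cr a b - cr a c := by simp [cr]; ring
theorem cr_add_left (a b c : ℝ × ℝ) : cr (a + b) c = cr a c + cr b c := by simp [cr]; ring
theorem cr_smul_right (a b : ℝ × ℝ) (t : ℝ) : cr a (t • b) = t * cr a b := by simp [cr]; ring
theorem cr_smul_left (a b : ℝ × ℝ) (t : ℝ) : cr (t • a) b = t * cr a b := by simp [cr]; ring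
theorem cr_self (a : ℝ × ℝ) : cr a a = 0 := by simp [cr]; ring
theorem cr_zero_right (a : ℝ × ℝ) : cr a 0 = 0 := by simp [cr]
theorem cr_swap (a b : ℝ × ℝ) : cr a b = - cr b a := by simp [cr]; ring

structure Oct (P : Set (ℝ × ℝ)) where
  e : Fin 8 → ℝ × ℝ
  p : Fin 8 → ℝ × ℝ
  he : ∀ i, e (i + 4) = - e i
  hp : ∀ i, p (i + 1) = p i + e i
  d1 : ∀ i, 0 < cr (e i) (e (i + 1))
  d2 : ∀ i, 0 < cr (e i) (e (i + 2))
  d3 : ∀ i, 0 < cr (e i) (e (i + 3))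
  hP : ∀ y, y ∈ P ↔ ∀ l, 0 ≤ cr (e l) (y - p l)
  bdd : ∃ R : ℝ, ∀ y ∈ P, ‖y‖ ≤ R

namespace Oct
variable {P : Set (ℝ × ℝ)} (O : Oct P)

def g (l : Fin 8) (y : ℝ × ℝ) : ℝ := cr (O.e l) (y - O.p l)

theorem e4 (i : Fin 8) : O.e (i + 4) = - O.e i := O.he i
theorem e5 (i : Fin 8) : O.e (i + 5) = - O.e (i + 1) := by rw [← O.he, add_assoc]; rfl
theorem e6 (i : Fin 8) : O.e (i + 6) = - O.e (i + 2) := by rw [← O.he, add_assoc]; rfl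
theorem e7 (i : Fin 8) : O.e (i + 7) = - O.e (i + 3) := by rw [← O.he, add_assoc]; rfl
theorem p1 (i : Fin 8) : O.p (i + 1) = O.p i + O.e i := O.hp i
theorem p2 (i : Fin 8) : O.p (i + 2) = O.p i + O.e i + O.e (i + 1) := by
  rw [← O.p1, ← O.p1, add_assoc]; rfl
theorem p3 (i : Fin 8) : O.p (i + 3) = O.p i + O.e i + O.e (i + 1) + O.e (i + 2) := by
  rw [← O.p2, ← O.p1, add_assoc]; rfl
theorem p4 (i : Fin 8) : O.p (i + 4) = O.p i + O.e i + O.e (i + 1) + O.e (i + 2) + O.e (i + 3) := by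
  rw [← O.p3, ← O.p1, add_assoc]; rfl
theorem p5 (i : Fin 8) : O.p (i + 5) = O.p i + O.e (i + 1) + O.e (i + 2) + O.e (i + 3) := by
  have : O.p (i + 5) = O.p (i + 4) + O.e (i + 4) := by rw [← O.p1, add_assoc]; rfl
  rw [this, p4, e4]; abel
theorem p6 (i : Fin 8) : O.p (i + 6) = O.p i + O.e (i + 2) + O.e (i + 3) := by
  have : O.p (i + 6) = O.p (i + 5) + O.e (i + 5) := by rw [← O.p1, add_assoc]; rfl
  rw [this, p5, e5]; abel
theorem p7 (i : Fin 8) : O.p (i + 7) = O.p i + O.e (i + 3) := by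
  have : O.p (i + 7) = O.p (i + 6) + O.e (i + 6) := by rw [← O.p1, add_assoc]; rfl
  rw [this, p6, e6]; abel

theorem ind (l m : Fin 8) : l = m ∨ l = m + 1 ∨ l = m + 2 ∨ l = m + 3 ∨ l = m + 4 ∨ l = m + 5 ∨
    l = m + 6 ∨ l = m + 7 := by
  revert l m; decide

/-- crossed dets around a fixed index, in terms of the first four edges -/
theorem dd (m : Fin 8) : 0 < cr (O.e m) (O.e (m+1)) ∧ 0 < cr (O.e m) (O.e (m+2)) ∧
    0 < cr (O.e m) (O.e (m+3)) ∧ 0 < cr (O.e (m+1)) (O.e (m+2)) ∧ 0 < cr (O.e (m+1)) (O.e (m+3)) ∧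
    0 < cr (O.e (m+2)) (O.e (m+3)) := by
  refine ⟨O.d1 m, O.d2 m, O.d3 m, ?_, ?_, ?_⟩
  · have := O.d1 (m+1); rwa [add_assoc] at this
  · have := O.d2 (m+1); rwa [add_assoc] at this
  · have := O.d1 (m+2); rwa [add_assoc] at this

theorem g_add (l : Fin 8) (y u : ℝ × ℝ) : O.g l (y + u) = O.g l y + cr (O.e l) u := by
  simp [g, cr]; ring

theorem g_p_self (l : Fin 8) : O.g l (O.p l) = 0 := by simp [g, cr]
theorem g_p_succ (l : Fin 8) : O.g l (O.p (l+1)) = 0 := by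
  rw [p1, g_add, g_p_self, cr_self]; simp
theorem g_p_pred (l : Fin 8) : O.g (l+7) (O.p l) = 0 := by
  have := O.g_p_succ (l+7)
  rw [add_assoc] at this
  simpa using this

theorem g_p_pos (l m : Fin 8) (h1 : l ≠ m) (h2 : l ≠ m + 7) : 0 < O.g l (O.p m) := by
  obtain ⟨a, b, c, d, f, k⟩ := O.dd m
  rcases ind l m with h | h | h | h | h | h | h | h
  · exact absurd h h1
  · rw [h, g, p1]; simp only [cr, Prod.fst_add, Prod.snd_add, Prod.fst_sub, Prod.snd_sub] at *; linarith
  · rw [h, g, p2]; simp only [cr, Prod.fst_add, Prod.snd_add, Prod.fst_sub, Prod.snd_sub] at *; linarith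
  · rw [h, g, p3]; simp only [cr, Prod.fst_add, Prod.snd_add, Prod.fst_sub, Prod.snd_sub] at *; linarith
  · rw [h, g, p4, e4]; simp only [cr, Prod.fst_add, Prod.snd_add, Prod.fst_sub, Prod.snd_sub, Prod.fst_neg, Prod.snd_neg] at *; linarith
  · rw [h, g, p5, e5]; simp only [cr, Prod.fst_add, Prod.snd_add, Prod.fst_sub, Prod.snd_sub, Prod.fst_neg, Prod.snd_neg] at *; linarith
  · rw [h, g, p6, e6]; simp only [cr, Prod.fst_add, Prod.snd_add, Prod.fst_sub, Prod.snd_sub, Prod.fst_neg, Prod.snd_neg] at *; linarith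
  · exact absurd h h2

def isI (y : ℝ × ℝ) : Prop := ∀ l, 0 < O.g l y

theorem mem_iff (y : ℝ × ℝ) : y ∈ P ↔ ∀ l, 0 ≤ O.g l y := O.hP y

theorem p_mem (m : Fin 8) : O.p m ∈ P := by
  rw [O.mem_iff]
  intro l
  by_cases h1 : l = m
  · rw [h1, g_p_self]
  by_cases h2 : l = m + 7
  · rw [h2, g_p_pred]
  exact (O.g_p_pos l m h1 h2).le

/-- diagonal points are interior -/
theorem diag1 (m : Fin 8) : O.isI (O.p m + O.e (m+1)) := by
  intro l
  obtain ⟨a, b, c, d, f, k⟩ := O.dd m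
  rcases ind l m with h | h | h | h | h | h | h | h <;>
    rw [h, g] <;> (try simp only [p1, p2, p3, p4, p5, p6, p7, e4, e5, e6, e7]) <;>
    simp only [cr, Prod.fst_add, Prod.snd_add, Prod.fst_sub, Prod.snd_sub, Prod.fst_neg, Prod.snd_neg] at * <;>
    linarith

theorem diag2 (m : Fin 8) : O.isI (O.p m + O.e (m+2)) := by
  intro l
  obtain ⟨a, b, c, d, f, k⟩ := O.dd m
  rcases ind l m with h | h | h | h | h | h | h | h <;>
    rw [h, g] <;> (try simp only [p1, p2, p3, p4, p5, p6, p7, e4, e5, e6, e7]) <;>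
    simp only [cr, Prod.fst_add, Prod.snd_add, Prod.fst_sub, Prod.snd_sub, Prod.fst_neg, Prod.snd_neg] at * <;>
    linarith

theorem g_nonneg_p (l m : Fin 8) : 0 ≤ O.g l (O.p m) := (O.mem_iff _).1 (O.p_mem m) l

theorem scale {y u : ℝ × ℝ} (hy : y ∈ P) (hu : O.isI (y + u)) {s : ℝ} (h0 : 0 < s) (h1 : s ≤ 1) :
    O.isI (y + s • u) := by
  intro l
  have a := (O.mem_iff y).1 hy l
  have b := hu l
  rw [g_add] at b ⊢
  rw [cr_smul_right]
  nlinarith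

theorem g_edge (l m : Fin 8) (t : ℝ) (u : ℝ × ℝ) : O.g l (O.p m + t • O.e m + u) =
    (1 - t) * O.g l (O.p m + u) + t * O.g l (O.p (m+1) + u) := by
  rw [p1]; simp [g, cr]; ring

theorem edge_mem (m : Fin 8) {t : ℝ} (h0 : 0 ≤ t) (h1 : t ≤ 1) : O.p m + t • O.e m ∈ P := by
  rw [O.mem_iff]
  intro l
  have := O.g_edge l m t 0
  simp only [add_zero] at this
  rw [this]
  have a := O.g_nonneg_p l m
  have b := O.g_nonneg_p l (m+1)
  have : 0 ≤ 1 - t := by linarith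
  positivity

theorem edge_int (m : Fin 8) {t : ℝ} (h0 : 0 < t) (h1 : t < 1) (u : ℝ × ℝ)
    (hu : (O.isI (O.p m + u) ∧ O.p (m+1) + u ∈ P) ∨ (O.p m + u ∈ P ∧ O.isI (O.p (m+1) + u))) :
    O.isI (O.p m + t • O.e m + u) := by
  intro l
  rw [g_edge]
  have h2 : 0 < 1 - t := by linarith
  rcases hu with ⟨a, b⟩ | ⟨a, b⟩
  · have a := a l
    have b := (O.mem_iff _).1 b l
    have := mul_pos h2 a
    have := mul_nonneg h0.le b
    linarith
  · have b := b l
    have a := (O.mem_iff _).1 a l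
    have := mul_nonneg h2.le a
    have := mul_pos h0 b
    linarith

theorem isI_mem {y : ℝ × ℝ} (h : O.isI y) : y ∈ P := (O.mem_iff y).2 fun l => (h l).le

theorem edge_int1 (m : Fin 8) {t : ℝ} (h0 : 0 < t) (h1 : t < 1) :
    O.isI (O.p m + t • O.e m + O.e (m+1)) := by
  apply O.edge_int m h0 h1
  left
  refine ⟨O.diag1 m, ?_⟩
  rw [← O.p1]; exact O.p_mem _

theorem edge_int2 (m : Fin 8) {t : ℝ} (h0 : 0 < t) (h1 : t < 1) :
    O.isI (O.p m + t • O.e m + O.e (m+2)) := by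
  apply O.edge_int m h0 h1
  left
  refine ⟨O.diag2 m, ?_⟩
  have := O.diag1 (m+1)
  rw [add_assoc] at this
  exact O.isI_mem this

theorem edge_int3 (m : Fin 8) {t : ℝ} (h0 : 0 < t) (h1 : t < 1) :
    O.isI (O.p m + t • O.e m + O.e (m+3)) := by
  apply O.edge_int m h0 h1
  right
  constructor
  · rw [← p7]; exact O.p_mem _
  · have := O.diag2 (m+1)
    rwa [add_assoc] at this

/-- zero set -/
noncomputable def Z (y : ℝ × ℝ) : Finset (Fin 8) := by
  classical exact Finset.univ.filter fun l => O.g l y = 0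

theorem mem_Z {y : ℝ × ℝ} {l : Fin 8} : l ∈ O.Z y ↔ O.g l y = 0 := by simp [Z]

theorem Z_p (m : Fin 8) : O.Z (O.p m) = {m + 7, m} := by
  ext l
  rw [mem_Z]
  simp only [Finset.mem_insert, Finset.mem_singleton]
  constructor
  · intro h
    by_contra hc
    push Not at hc
    exact (O.g_p_pos l m hc.2 hc.1).ne' h
  · rintro (h | h)
    · rw [h, g_p_pred]
    · rw [h, g_p_self]

theorem Z_edge (m : Fin 8) {t : ℝ} (h0 : 0 < t) (h1 : t < 1) :
    O.Z (O.p m + t • O.e m) = {m} := by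
  ext l
  rw [mem_Z]
  simp only [Finset.mem_singleton]
  have h2 : 0 < 1 - t := by linarith
  have e := O.g_edge l m t 0
  simp only [add_zero] at e
  rw [e]
  constructor
  · intro h
    by_contra hc
    have a := O.g_nonneg_p l m
    have b := O.g_nonneg_p l (m+1)
    by_cases h7 : l = m + 7
    · have : 0 < O.g l (O.p (m+1)) := by
        apply O.g_p_pos
        · rw [h7]; exact (by decide : ∀ m : Fin 8, m + 7 ≠ m + 1) m
        · rw [h7]; exact (by decide : ∀ m : Fin 8, m + 7 ≠ m + 1 + 7) m
      nlinarith [mul_pos h0 this, mul_nonneg h2.le a]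
    · have := O.g_p_pos l m hc h7
      nlinarith [mul_pos h2 this, mul_nonneg h0.le b]
  · rintro rfl
    rw [g_p_self, g_p_succ]; ring

theorem isI_iff (y : ℝ × ℝ) : O.isI y ↔ y ∈ P ∧ O.Z y = ∅ := by
  rw [O.mem_iff, Finset.eq_empty_iff_forall_notMem]
  constructor
  · intro h
    exact ⟨fun l => (h l).le, fun l hl => (h l).ne' (O.mem_Z.1 hl)⟩
  · rintro ⟨h1, h2⟩ l
    exact lt_of_le_of_ne (h1 l) fun h => h2 l (O.mem_Z.2 h.symm)

theorem onLine {a b : ℝ × ℝ} (h : cr a b = 0) (ha : a ≠ 0) : ∃ t : ℝ, b = t • a := by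
  by_cases h1 : a.1 = 0
  · have h2 : a.2 ≠ 0 := fun h2 => ha (Prod.ext h1 h2)
    refine ⟨b.2 / a.2, Prod.ext ?_ ?_⟩
    · simp only [cr, h1] at h
      have : b.1 = 0 := by
        rcases mul_eq_zero.1 (show a.2 * b.1 = 0 by linarith) with h | h
        · exact absurd h h2
        · exact h
      simp [h1, this]
    · simp; field_simp
  · refine ⟨b.1 / a.1, Prod.ext ?_ ?_⟩
    · simp; field_simp
    · simp only [cr] at h
      simp; field_simp; linarith

theorem e_ne (m : Fin 8) : O.e m ≠ 0 := by
  intro h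
  have := O.d1 m
  rw [h] at this
  simp [cr] at this

theorem cases {y : ℝ × ℝ} (hy : y ∈ P) : O.Z y = ∅ ∨
    (∃ i, ∃ t : ℝ, 0 < t ∧ t < 1 ∧ y = O.p i + t • O.e i ∧ O.Z y = {i}) ∨
    (∃ i, y = O.p i ∧ O.Z y = {i + 7, i}) := by
  rcases Finset.eq_empty_or_nonempty (O.Z y) with h | ⟨i, hi⟩
  · exact Or.inl h
  right
  rw [mem_Z] at hi
  obtain ⟨t, ht⟩ := onLine hi (O.e_ne i)
  have hyt : y = O.p i + t • O.e i := by rw [← ht]; abel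
  rw [O.mem_iff] at hy
  have h1 : t ≤ 1 := by
    have a := hy (i+1)
    rw [hyt, g_add, g, p1, cr_smul_right] at a
    have b := O.d1 i
    simp only [cr, Prod.fst_add, Prod.snd_add, Prod.fst_sub, Prod.snd_sub] at *
    by_contra hc
    push Not at hc
    nlinarith
  have h0 : 0 ≤ t := by
    have a := hy (i+7)
    rw [hyt, g_add, g_p_pred, cr_smul_right, e7, cr_neg_left] at a
    have b := O.d3 i
    rw [cr_swap] at b
    by_contra hc
    push Not at hc
    nlinarith
  rcases h0.eq_or_lt with h | h
  · right
    have : y = O.p i := by rw [hyt, ← h]; simp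
    exact ⟨i, this, by rw [this, Z_p]⟩
  rcases h1.eq_or_lt with h' | h'
  · right
    have : y = O.p (i+1) := by rw [hyt, h', p1]; simp
    exact ⟨i+1, this, by rw [this, Z_p]⟩
  · left
    exact ⟨i, t, h, h', hyt, by rw [hyt, O.Z_edge i h h']⟩

theorem Z_eq_pair {y : ℝ × ℝ} (hy : y ∈ P) {i : Fin 8} (h : O.Z y = {i + 7, i}) : y = O.p i := by
  rcases O.cases hy with h' | ⟨l, t, _, _, _, h'⟩ | ⟨l, e, h'⟩
  · rw [h] at h'; simp at h'
  · rw [h] at h'; exact absurd h' ((by decide : ∀ i l : Fin 8, ({i + 7, i} : Finset (Fin 8)) ≠ {l}) i l)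
  · rw [h] at h'
    have : i = l := by clear h e; revert i l; decide
    rw [this, e]

theorem Z_eq_single {y : ℝ × ℝ} (hy : y ∈ P) {i : Fin 8} (h : O.Z y = {i}) :
    ∃ t : ℝ, 0 < t ∧ t < 1 ∧ y = O.p i + t • O.e i := by
  rcases O.cases hy with h' | ⟨l, t, h0, h1, e, h'⟩ | ⟨l, e, h'⟩
  · rw [h] at h'; simp at h'
  · rw [h] at h'
    have : i = l := by simpa using h'
    exact ⟨t, h0, h1, by rw [this, e]⟩
  · rw [h] at h'; exact absurd h'.symm ((by decide : ∀ i l : Fin 8, ({i + 7, i} : Finset (Fin 8)) ≠ {l}) l i)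

end Oct

namespace Oct
variable {P : Set (ℝ × ℝ)} (O : Oct P)

/-- locally inside in the sector between `e (j+3)` and `e (j+4)` -/
def D (j : Fin 8) (y : ℝ × ℝ) : Prop := y ∈ P ∧ O.Z y ⊆ {j, j+1, j+2, j+3}

def u (j : Fin 8) : ℝ × ℝ := O.e (j+3) + O.e (j+4)

theorem cr_u_pos (j l : Fin 8) (h : l ∈ ({j, j+1, j+2, j+3} : Finset (Fin 8))) :
    0 < cr (O.e l) (O.u j) := by
  obtain ⟨a, b, c, d, f, k⟩ := O.dd j
  simp only [Finset.mem_insert, Finset.mem_singleton] at h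
  rcases h with h | h | h | h <;> rw [h, u, e4] <;>
    simp only [cr, Prod.fst_add, Prod.snd_add, Prod.fst_neg, Prod.snd_neg] at * <;> linarith

theorem cr_u_neg (j l : Fin 8) (h : l ∉ ({j, j+1, j+2, j+3} : Finset (Fin 8))) :
    cr (O.e l) (O.u j) < 0 := by
  obtain ⟨a, b, c, d, f, k⟩ := O.dd j
  simp only [Finset.mem_insert, Finset.mem_singleton, not_or] at h
  obtain ⟨h0, h1, h2, h3⟩ := h
  rcases ind l j with h | h | h | h | h | h | h | h
  · exact absurd h h0
  · exact absurd h h1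
  · exact absurd h h2
  · exact absurd h h3
  all_goals
    rw [h, u]
    simp only [e4, e5, e6, e7]
    simp only [cr, Prod.fst_add, Prod.snd_add, Prod.fst_neg, Prod.snd_neg] at *
    linarith

open Filter Topology in
theorem ev_pos {a : ℝ} (ha : 0 < a) (b : ℝ) : ∀ᶠ ε : ℝ in 𝓝[>] 0, 0 < a + ε * b := by
  have : Tendsto (fun ε : ℝ => a + ε * b) (𝓝[>] 0) (𝓝 (a + 0 * b)) := by
    apply Tendsto.mono_left _ nhdsWithin_le_nhds
    exact (Continuous.tendsto (by fun_prop) 0)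
  exact this.eventually (lt_mem_nhds (by simpa using ha))

open Filter Topology in
theorem ev_in {j : Fin 8} {y : ℝ × ℝ} (h : O.D j y) :
    ∀ᶠ ε : ℝ in 𝓝[>] 0, O.isI (y + ε • O.u j) := by
  unfold isI
  rw [eventually_all]
  intro l
  simp only [g_add, cr_smul_right]
  rcases ((O.mem_iff y).1 h.1 l).eq_or_lt with h0 | h0
  · have hl := O.cr_u_pos j l (h.2 (O.mem_Z.2 h0.symm))
    filter_upwards [self_mem_nhdsWithin] with ε hε
    rw [← h0, zero_add]
    exact mul_pos hε hl
  · exact ev_pos h0 _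

open Filter Topology in
theorem ev_out {j : Fin 8} {y : ℝ × ℝ} (h : ¬ O.D j y) :
    ∀ᶠ ε : ℝ in 𝓝[>] 0, y + ε • O.u j ∉ P := by
  by_cases hy : y ∈ P
  · have : ¬ O.Z y ⊆ {j, j+1, j+2, j+3} := fun h' => h ⟨hy, h'⟩
    rw [Finset.not_subset] at this
    obtain ⟨l, hl, hn⟩ := this
    have hc := O.cr_u_neg j l hn
    rw [mem_Z] at hl
    filter_upwards [self_mem_nhdsWithin] with ε hε
    intro hm
    have := (O.mem_iff _).1 hm l
    rw [g_add, cr_smul_right, hl, zero_add] at this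
    have := mul_neg_of_pos_of_neg hε hc
    linarith
  · rw [O.mem_iff] at hy
    push Not at hy
    obtain ⟨l, hl⟩ := hy
    have := ev_pos (a := - O.g l y) (by linarith) (- cr (O.e l) (O.u j))
    filter_upwards [this] with ε hε
    intro hm
    have := (O.mem_iff _).1 hm l
    rw [g_add, cr_smul_right] at this
    linarith

theorem isI_interior {y : ℝ × ℝ} (h : O.isI y) : y ∈ interior P := by
  have ho : IsOpen {y | O.isI y} := by
    have : {y | O.isI y} = ⋂ l, {y | 0 < O.g l y} := by ext; simp [isI]
    rw [this]
    apply isOpen_iInter_of_finite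
    intro l
    apply isOpen_lt continuous_const
    unfold g cr
    fun_prop
  exact interior_maximal (fun y hy => O.isI_mem hy) ho h

end Oct

section count
variable {P : Set (ℝ × ℝ)} (O : Oct P) {ι : Type} (x : ι → ℝ × ℝ)
  (hf : ∀ v, {t | v - x t ∈ P}.Finite)

/-- tiles meeting a point -/
noncomputable def N (v : ℝ × ℝ) : Finset ι := (hf v).toFinset

theorem mem_N {v : ℝ × ℝ} {t : ι} : t ∈ N x hf v ↔ v - x t ∈ P := by simp [N]

/-- tiles with the point in the interior -/
noncomputable def I (v : ℝ × ℝ) : Finset ι := (N x hf v).filter fun t => O.Z (v - x t) = ∅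
noncomputable def hh (v : ℝ × ℝ) (i : Fin 8) : ℕ :=
  ((N x hf v).filter fun t => O.Z (v - x t) = {i}).card
noncomputable def ww (v : ℝ × ℝ) (i : Fin 8) : ℕ :=
  ((N x hf v).filter fun t => O.Z (v - x t) = {i + 7, i}).card

theorem mem_I {v : ℝ × ℝ} {t : ι} : t ∈ I O x hf v ↔ O.isI (v - x t) := by
  rw [I, Finset.mem_filter, mem_N, O.isI_iff]

theorem ww_pos {v : ℝ × ℝ} {i : Fin 8} : 0 < ww O x hf v i ↔ ∃ t, v - x t = O.p i := by
  rw [ww, Finset.card_pos]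
  constructor
  · rintro ⟨t, ht⟩
    rw [Finset.mem_filter, mem_N] at ht
    exact ⟨t, O.Z_eq_pair ht.1 ht.2⟩
  · rintro ⟨t, ht⟩
    refine ⟨t, ?_⟩
    rw [Finset.mem_filter, mem_N, ht]
    exact ⟨O.p_mem i, O.Z_p i⟩

theorem hh_pos {v : ℝ × ℝ} {i : Fin 8} : 0 < hh O x hf v i ↔
    ∃ t, ∃ s : ℝ, 0 < s ∧ s < 1 ∧ v - x t = O.p i + s • O.e i := by
  rw [hh, Finset.card_pos]
  constructor
  · rintro ⟨t, ht⟩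
    rw [Finset.mem_filter, mem_N] at ht
    exact ⟨t, O.Z_eq_single ht.1 ht.2⟩
  · rintro ⟨t, s, h0, h1, ht⟩
    refine ⟨t, ?_⟩
    rw [Finset.mem_filter, mem_N, ht]
    exact ⟨O.edge_mem i h0.le h1.le, O.Z_edge i h0 h1⟩

theorem pointwise1 (j : Fin 8) {y : ℝ × ℝ} (hy : y ∈ P) :
    (if O.Z y ⊆ {j, j+1, j+2, j+3} then 1 else 0) =
    (if O.Z y = ∅ then 1 else 0) + (if O.Z y = {j} then 1 else 0) + (if O.Z y = {j+1} then 1 else 0)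
    + (if O.Z y = {j+2} then 1 else 0) + (if O.Z y = {j+3} then 1 else 0)
    + (if O.Z y = {j+1+7, j+1} then 1 else 0) + (if O.Z y = {j+2+7, j+2} then 1 else 0)
    + (if O.Z y = {j+3+7, j+3} then 1 else 0) := by
  rcases O.cases hy with h | ⟨i, t, _, _, _, h⟩ | ⟨i, _, h⟩
  · rw [h]; revert j; decide
  · rw [h]; clear h; clear * - i j; revert i j; decide
  · rw [h]; clear h; clear * - i j; revert i j; decide

theorem sector {k : ℕ} (ht : IsKFoldTranslativeTiling P x k) (v : ℝ × ℝ) (j : Fin 8) :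
    (I O x hf v).card + hh O x hf v j + hh O x hf v (j+1) + hh O x hf v (j+2) + hh O x hf v (j+3)
     + ww O x hf v (j+1) + ww O x hf v (j+2) + ww O x hf v (j+3) = k := by
  classical
  have key : ((N x hf v).filter fun t => O.Z (v - x t) ⊆ {j, j+1, j+2, j+3}).card =
    (I O x hf v).card + hh O x hf v j + hh O x hf v (j+1) + hh O x hf v (j+2) + hh O x hf v (j+3)
     + ww O x hf v (j+1) + ww O x hf v (j+2) + ww O x hf v (j+3) := by
    simp only [I, hh, ww, Finset.card_filter, ← Finset.sum_add_distrib]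
    apply Finset.sum_congr rfl
    intro t hN
    exact pointwise1 O j ((mem_N x hf).1 hN)
  rw [← key]
  obtain ⟨h1, h2, h3⟩ := ht
  obtain ⟨R, hR⟩ := O.bdd
  set B : ℝ := ‖v‖ + ‖O.u j‖ + R with hB
  have hfin := h1 B
  have ev : ∀ᶠ ε : ℝ in nhdsWithin 0 (Set.Ioi 0), ∀ t ∈ {i : ι | ‖x i‖ ≤ B},
      (O.D j (v - x t) → O.isI (v - x t + ε • O.u j)) ∧
      (¬ O.D j (v - x t) → v - x t + ε • O.u j ∉ P) := by
    rw [Filter.eventually_all_finite hfin]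
    intro t _
    by_cases hD : O.D j (v - x t)
    · filter_upwards [O.ev_in hD] with ε hε
      exact ⟨fun _ => hε, fun h => absurd hD h⟩
    · filter_upwards [O.ev_out hD] with ε hε
      exact ⟨fun h => absurd h hD, fun _ => hε⟩
  have ev1 : ∀ᶠ ε : ℝ in nhdsWithin 0 (Set.Ioi 0), ε ∈ Set.Ioo (0:ℝ) 1 :=
    Ioo_mem_nhdsGT one_pos
  obtain ⟨ε, hε, hε0, hε1⟩ := (ev.and ev1).exists
  have far : ∀ t, ∀ s : ℝ, 0 ≤ s → s ≤ 1 → v - x t + s • O.u j ∈ P → ‖x t‖ ≤ B := by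
    intro t s hs0 hs1 hm
    have a := hR _ hm
    have : x t = v + s • O.u j - (v - x t + s • O.u j) := by abel
    rw [this]
    calc _ ≤ ‖v + s • O.u j‖ + ‖v - x t + s • O.u j‖ := norm_sub_le _ _
      _ ≤ ‖v‖ + ‖s • O.u j‖ + R := add_le_add (norm_add_le _ _) a
      _ ≤ B := by
        rw [norm_smul, Real.norm_of_nonneg hs0, hB]
        have := mul_le_of_le_one_left (norm_nonneg (O.u j)) hs1
        linarith
  have hre : ∀ t, v + ε • O.u j - x t = v - x t + ε • O.u j := fun t => by abel
  apply le_antisymm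
  · apply h3 (v + ε • O.u j)
    intro t htm
    rw [Finset.mem_filter, mem_N] at htm
    rw [hre]
    apply O.isI_interior
    refine (hε t ?_).1 htm
    exact far t 0 le_rfl zero_le_one (by simpa using htm.1)
  · obtain ⟨s, hs, hs'⟩ := h2 (v + ε • O.u j)
    refine hs.trans (Finset.card_le_card ?_)
    intro t hts
    have a := hs' t hts
    rw [hre] at a
    rw [Finset.mem_filter, mem_N]
    by_contra hc
    exact (hε t (far t ε hε0.le hε1.le a)).2 hc a

theorem wedge_in1 {v : ℝ × ℝ} {t : ι} {m : Fin 8} (h : v - x t = O.p m) {s : ℝ} (h0 : 0 < s) (h1 : s ≤ 1) :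
    t ∈ I O x hf (v + s • O.e (m+1)) := by
  rw [mem_I, add_sub_right_comm, h]
  exact O.scale (O.p_mem m) (O.diag1 m) h0 h1

theorem wedge_in2 {v : ℝ × ℝ} {t : ι} {m : Fin 8} (h : v - x t = O.p m) {s : ℝ} (h0 : 0 < s) (h1 : s ≤ 1) :
    t ∈ I O x hf (v + s • O.e (m+2)) := by
  rw [mem_I, add_sub_right_comm, h]
  exact O.scale (O.p_mem m) (O.diag2 m) h0 h1

theorem edge_in2 {v : ℝ × ℝ} {t : ι} {m : Fin 8} {r : ℝ} (hr0 : 0 < r) (hr1 : r < 1)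
    (h : v - x t = O.p m + r • O.e m) {s : ℝ} (h0 : 0 < s) (h1 : s ≤ 1) :
    t ∈ I O x hf (v + s • O.e (m+2)) := by
  rw [mem_I, add_sub_right_comm, h]
  exact O.scale (O.edge_mem m hr0.le hr1.le) (O.edge_int2 m hr0 hr1) h0 h1

theorem strict_in {y : ℝ × ℝ} (hy : y ∈ P) (i : Fin 8) (hZ : O.Z y = {i+5} ∨ O.Z y = {i+6} ∨
    O.Z y = {i+7} ∨ O.Z y = {i+6+7, i+6} ∨ O.Z y = {i+7+7, i+7}) : O.isI (y + O.e i) := by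
  rcases hZ with h | h | h | h | h
  · obtain ⟨t, h0, h1, e⟩ := O.Z_eq_single hy h
    have := O.edge_int3 (i+5) h0 h1
    rw [show i + 5 + 3 = i from (by decide : ∀ i : Fin 8, i + 5 + 3 = i) i] at this
    rwa [e]
  · obtain ⟨t, h0, h1, e⟩ := O.Z_eq_single hy h
    have := O.edge_int2 (i+6) h0 h1
    rw [show i + 6 + 2 = i from (by decide : ∀ i : Fin 8, i + 6 + 2 = i) i] at this
    rwa [e]
  · obtain ⟨t, h0, h1, e⟩ := O.Z_eq_single hy h
    have := O.edge_int1 (i+7) h0 h1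
    rw [show i + 7 + 1 = i from (by decide : ∀ i : Fin 8, i + 7 + 1 = i) i] at this
    rwa [e]
  · have e := O.Z_eq_pair hy h
    have := O.diag2 (i+6)
    rw [show i + 6 + 2 = i from (by decide : ∀ i : Fin 8, i + 6 + 2 = i) i] at this
    rwa [e]
  · have e := O.Z_eq_pair hy h
    have := O.diag1 (i+7)
    rw [show i + 7 + 1 = i from (by decide : ∀ i : Fin 8, i + 7 + 1 = i) i] at this
    rwa [e]

theorem nbr (v : ℝ × ℝ) (i : Fin 8) : hh O x hf v (i+5) + hh O x hf v (i+6) + hh O x hf v (i+7)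
    + ww O x hf v (i+6) + ww O x hf v (i+7) ≤ (I O x hf (v + O.e i)).card := by
  classical
  have h1 : ((N x hf v).filter fun t => O.isI (v - x t + O.e i)).card ≤ (I O x hf (v + O.e i)).card := by
    apply Finset.card_le_card
    intro t ht
    rw [Finset.mem_filter] at ht
    rw [mem_I, add_sub_right_comm]
    exact ht.2
  refine le_trans ?_ h1
  simp only [hh, ww, Finset.card_filter, ← Finset.sum_add_distrib]
  apply Finset.sum_le_sum
  intro t hN
  rw [mem_N] at hN
  have key := strict_in O hN i
  by_cases hc : O.isI (v - x t + O.e i)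
  · rw [if_pos hc]
    rcases O.cases hN with h | ⟨l, t, _, _, _, h⟩ | ⟨l, _, h⟩
    · rw [h]; clear * - i; revert i; decide
    · rw [h]; clear * - i l; revert i l; decide
    · rw [h]; clear * - i l; revert i l; decide
  · have := mt key hc
    push Not at this
    obtain ⟨a1, a2, a3, a4, a5⟩ := this
    simp [a1, a2, a3, a4, a5]

end count

section final
variable {P : Set (ℝ × ℝ)} (O : Oct P) {ι : Type} (x : ι → ℝ × ℝ)
  (hf : ∀ v, {t | v - x t ∈ P}.Finite)

theorem not_I_of_p {v : ℝ × ℝ} {t : ι} {m : Fin 8} (h : v - x t = O.p m) : t ∉ I O x hf v := by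
  intro hI
  rw [I, Finset.mem_filter, h, O.Z_p] at hI
  have : m ∈ (∅ : Finset (Fin 8)) := by rw [← hI.2]; simp
  simp at this

theorem lemM {k : ℕ} (ht : IsKFoldTranslativeTiling P x k) (hk4 : k ≤ 4) {v : ℝ × ℝ}
    (hV : ∃ i, 0 < ww O x hf v i) (hF : (I O x hf v).card + 2 = k) {τ : ι} {s : ℝ} {m : Fin 8}
    (h0 : 0 < s) (h1 : s < 1) (h : v - x τ = O.p m + s • O.e m) {a a' : ℝ × ℝ}
    (ha : a - x τ = O.p m) (ha' : a' - x τ = O.p (m+1)) :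
    (I O x hf a).card + 2 = k ∧ (I O x hf a').card + 2 = k := by
  have E := fun v => sector O x hf ht v
  have hm : 0 < hh O x hf v (m+0) := by
    rw [add_zero]; exact (hh_pos O x hf).2 ⟨τ, s, h0, h1, h⟩
  obtain ⟨-, w7, w2, -⟩ := arithL2' (E v) hV hF m hm
  have wa : 0 < ww O x hf a (m+0) := by
    rw [add_zero]; exact (ww_pos O x hf).2 ⟨τ, ha⟩
  have wa' : 0 < ww O x hf a' (m+1) := (ww_pos O x hf).2 ⟨τ, ha'⟩
  have la := arithL0 (E a) ⟨_, wa⟩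
  have la' := arithL0 (E a') ⟨_, wa'⟩
  rw [O.p1] at ha'
  have i24 : m + 2 + 2 = m + 4 := (by decide : ∀ m : Fin 8, m + 2 + 2 = m + 4) m
  have i31 : m + 3 + 1 = m + 4 := (by decide : ∀ m : Fin 8, m + 3 + 1 = m + 4) m
  have i62 : m + 6 + 2 = m := (by decide : ∀ m : Fin 8, m + 6 + 2 = m) m
  have i71 : m + 7 + 1 = m := (by decide : ∀ m : Fin 8, m + 7 + 1 = m) m
  have e1 : a = v + s • O.e (m+4) := by
    rw [O.e4]; linear_combination (norm := module) ha - h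
  have e2 : a = a' + (1:ℝ) • O.e (m+4) := by
    rw [O.e4]; linear_combination (norm := module) ha - ha'
  have e3 : v = a' + (1-s) • O.e (m+4) := by
    rw [O.e4]; linear_combination (norm := module) h - ha'
  have e4 : a' = v + (1-s) • O.e m := by
    linear_combination (norm := module) ha' - h
  have e5 : a' = a + (1:ℝ) • O.e m := by
    linear_combination (norm := module) ha' - ha
  have e6 : v = a + s • O.e m := by
    linear_combination (norm := module) h - ha
  constructor
  · by_contra hne
    have hc : (I O x hf a).card ≤ 1 := by omega
    rw [Finset.card_le_one] at hc
    obtain ⟨σ, hσ⟩ := (ww_pos O x hf).1 w2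
    have s1 : σ ∈ I O x hf a := by
      have := wedge_in2 O x hf hσ h0 h1.le
      rwa [i24, ← e1] at this
    have s2 := not_I_of_p O x hf hσ
    have key : ∃ ρ, ∀ r : ℝ, 0 < r → r ≤ 1 → ρ ∈ I O x hf (a' + r • O.e (m+4)) := by
      have := arithL3 (E a') m wa'
      have : 0 < hh O x hf a' (m+2) ∨ 0 < ww O x hf a' (m+2) ∨ 0 < ww O x hf a' (m+3) := by omega
      rcases this with H | H | H
      · obtain ⟨ρ, q, q0, q1, hq⟩ := (hh_pos O x hf).1 H
        exact ⟨ρ, fun r r0 r1 => i24 ▸ edge_in2 O x hf q0 q1 hq r0 r1⟩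
      · obtain ⟨ρ, hq⟩ := (ww_pos O x hf).1 H
        exact ⟨ρ, fun r r0 r1 => i24 ▸ wedge_in2 O x hf hq r0 r1⟩
      · obtain ⟨ρ, hq⟩ := (ww_pos O x hf).1 H
        exact ⟨ρ, fun r r0 r1 => i31 ▸ wedge_in1 O x hf hq r0 r1⟩
    obtain ⟨ρ, hρ⟩ := key
    have r1 := hρ 1 one_pos le_rfl
    have r2 := hρ (1-s) (by linarith) (by linarith)
    rw [← e2] at r1
    rw [← e3] at r2
    rw [hc _ r1 _ s1] at r2
    exact s2 r2
  · by_contra hne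
    have hc : (I O x hf a').card ≤ 1 := by omega
    rw [Finset.card_le_one] at hc
    obtain ⟨σ, hσ⟩ := (ww_pos O x hf).1 w7
    have s1 : σ ∈ I O x hf a' := by
      have := wedge_in1 O x hf hσ (s := 1 - s) (by linarith) (by linarith)
      rwa [i71, ← e4] at this
    have s2 := not_I_of_p O x hf hσ
    have key : ∃ ρ, ∀ r : ℝ, 0 < r → r ≤ 1 → ρ ∈ I O x hf (a + r • O.e m) := by
      have := arithL3' (E a) m wa
      have : 0 < hh O x hf a (m+6) ∨ 0 < ww O x hf a (m+6) ∨ 0 < ww O x hf a (m+7) := by omega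
      rcases this with H | H | H
      · obtain ⟨ρ, q, q0, q1, hq⟩ := (hh_pos O x hf).1 H
        refine ⟨ρ, fun r r0 r1 => ?_⟩
        have := edge_in2 O x hf q0 q1 hq r0 r1
        rwa [i62] at this
      · obtain ⟨ρ, hq⟩ := (ww_pos O x hf).1 H
        refine ⟨ρ, fun r r0 r1 => ?_⟩
        have := wedge_in2 O x hf hq r0 r1
        rwa [i62] at this
      · obtain ⟨ρ, hq⟩ := (ww_pos O x hf).1 H
        refine ⟨ρ, fun r r0 r1 => ?_⟩
        have := wedge_in1 O x hf hq r0 r1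
        rwa [i71] at this
    obtain ⟨ρ, hρ⟩ := key
    have r1 := hρ 1 one_pos le_rfl
    have r2 := hρ s h0 h1.le
    rw [← e5] at r1
    rw [← e6] at r2
    rw [hc _ r1 _ s1] at r2
    exact s2 r2

theorem exists_good {k : ℕ} (hk : 0 < k) (ht : IsKFoldTranslativeTiling P x k) (hk4 : k ≤ 4) :
    ∃ v, (∃ i, 0 < ww O x hf v i) ∧ (I O x hf v).card + 2 = k := by
  have E := fun v => sector O x hf ht v
  obtain ⟨S, hS, -⟩ := ht.2.1 0
  obtain ⟨t, -⟩ := Finset.card_pos.1 (lt_of_lt_of_le hk hS)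
  have hV : ∃ i, 0 < ww O x hf (x t + O.p 0) i := ⟨0, (ww_pos O x hf).2 ⟨t, by abel⟩⟩
  have l0 := arithL0 (E _) hV
  by_cases hF : (I O x hf (x t + O.p 0)).card + 2 = k
  · exact ⟨_, hV, hF⟩
  obtain ⟨i, hi, h2⟩ := arithL1 (E _) hV (by omega)
  have hn := nbr O x hf (x t + O.p 0) i
  obtain ⟨r, hr⟩ := (ww_pos O x hf).1 hi
  have hV' : ∃ j, 0 < ww O x hf (x t + O.p 0 + O.e i) j :=
    ⟨i+1, (ww_pos O x hf).2 ⟨r, by rw [O.p1, ← hr]; abel⟩⟩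
  have := arithL0 (E _) hV'
  exact ⟨_, hV', by omega⟩

theorem contra {P : Set (ℝ × ℝ)} (O : Oct P) {ι : Type} (x : ι → ℝ × ℝ)
    (hf : ∀ v, {t | v - x t ∈ P}.Finite) {k : ℕ} (hk : 0 < k) (ht : IsKFoldTranslativeTiling P x k) (hk4 : k ≤ 4) : False := by
  classical
  have E := fun v => sector O x hf ht v
  obtain ⟨v, hV, hF⟩ := exists_good O x hf hk ht hk4
  obtain ⟨m, hm⟩ := arithL2 (E v) hV hF
  obtain ⟨T0, s, s0, s1, hT0⟩ := (hh_pos O x hf).1 hm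
  obtain ⟨w4, -, -, w5⟩ := arithL2' (E v) hV hF m (by rwa [add_zero])
  obtain ⟨T1, hT1⟩ := (ww_pos O x hf).1 w4
  obtain ⟨T4, hT4⟩ := (ww_pos O x hf).1 w5
  have i451 : m + 4 + 1 = m + 5 := (by decide : ∀ m : Fin 8, m + 4 + 1 = m + 5) m
  have i44 : m + 4 + 4 = m := (by decide : ∀ m : Fin 8, m + 4 + 4 = m) m
  have i47 : m + 4 + 7 = m + 3 := (by decide : ∀ m : Fin 8, m + 4 + 7 = m + 3) m
  have i42 : m + 4 + 2 = m + 6 := (by decide : ∀ m : Fin 8, m + 4 + 2 = m + 6) m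
  have i45 : m + 4 + 5 = m + 1 := (by decide : ∀ m : Fin 8, m + 4 + 5 = m + 1) m
  have i24 : m + 2 + 2 = m + 4 := (by decide : ∀ m : Fin 8, m + 2 + 2 = m + 4) m
  have i31 : m + 3 + 1 = m + 4 := (by decide : ∀ m : Fin 8, m + 3 + 1 = m + 4) m
  have i62 : m + 6 + 2 = m := (by decide : ∀ m : Fin 8, m + 6 + 2 = m) m
  have i71 : m + 7 + 1 = m := (by decide : ∀ m : Fin 8, m + 7 + 1 = m) m
  set a := v - s • O.e m with hadef
  set a' := v + (1 - s) • O.e m with hadef'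
  have aT0 : a - x T0 = O.p m := by rw [hadef]; linear_combination (norm := module) hT0
  have aT0' : a' - x T0 = O.p (m+1) := by
    rw [hadef', O.p1]; linear_combination (norm := module) hT0
  obtain ⟨Fa, Fa'⟩ := lemM O x hf ht hk4 hV hF s0 s1 hT0 aT0 aT0'
  have Va : ∃ i, 0 < ww O x hf a i := ⟨_, (ww_pos O x hf).2 ⟨_, aT0⟩⟩
  have Va' : ∃ i, 0 < ww O x hf a' i := ⟨_, (ww_pos O x hf).2 ⟨_, aT0'⟩⟩
  have aT1 : a - x T1 = O.p (m+4) + s • O.e (m+4) := by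
    rw [hadef, ← hT1, O.e4]; module
  have hp5 : O.p (m+5) = O.p (m+4) + O.e (m+4) := by rw [← O.p1, i451]
  have aT4 : a' - x T4 = O.p (m+4) + s • O.e (m+4) := by
    rw [hp5] at hT4
    rw [hadef']
    rw [O.e4] at *
    linear_combination (norm := module) hT4
  have Fb := (lemM O x hf ht hk4 Va Fa s0 s1 aT1 (a := v) (a' := v - O.e m) hT1
    (by rw [i451, hp5, ← hT1, O.e4]; abel)).2
  have Fb' := (lemM O x hf ht hk4 Va' Fa' s0 s1 aT4 (a := v + O.e m) (a' := v)
    (by rw [hp5] at hT4; rw [O.e4] at hT4; linear_combination (norm := module) hT4)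
    (by rw [i451]; exact hT4)).1
  set b := v - O.e m with hb
  set b' := v + O.e m with hb'
  have Vb : ∃ i, 0 < ww O x hf b i := ⟨m+5, (ww_pos O x hf).2 ⟨T1, by
    rw [hp5, ← hT1, O.e4, hb]; abel⟩⟩
  have Vb' : ∃ i, 0 < ww O x hf b' i := ⟨m+4, (ww_pos O x hf).2 ⟨T4, by
    rw [hp5] at hT4; rw [O.e4] at hT4; linear_combination (norm := module) hT4⟩⟩
  obtain ⟨-, -, wa6, wa1⟩ := arithL2' (E a) Va Fa (m+4)
    (by rw [add_zero]; exact (hh_pos O x hf).2 ⟨_, _, s0, s1, aT1⟩)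
  obtain ⟨wa0', wa3', -, -⟩ := arithL2' (E a') Va' Fa' (m+4)
    (by rw [add_zero]; exact (hh_pos O x hf).2 ⟨_, _, s0, s1, aT4⟩)
  rw [i42] at wa6
  rw [i45] at wa1
  rw [i44] at wa0'
  rw [i47] at wa3'
  obtain ⟨G, hG⟩ := (ww_pos O x hf).1 wa6
  obtain ⟨G', hG'⟩ := (ww_pos O x hf).1 wa3'
  obtain ⟨Q, hQ⟩ := (ww_pos O x hf).1 wa1
  obtain ⟨Q', hQ'⟩ := (ww_pos O x hf).1 wa0'
  have bQ : b - x Q = O.p m + s • O.e m := by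
    rw [O.p1, hadef] at hQ
    rw [hb]
    linear_combination (norm := module) hQ
  have bQ' : b' - x Q' = O.p m + s • O.e m := by
    rw [hadef'] at hQ'
    rw [hb']
    linear_combination (norm := module) hQ'
  obtain ⟨-, wb7, -, -⟩ := arithL2' (E b) Vb Fb m
    (by rw [add_zero]; exact (hh_pos O x hf).2 ⟨_, _, s0, s1, bQ⟩)
  obtain ⟨-, -, wb2, -⟩ := arithL2' (E b') Vb' Fb' m
    (by rw [add_zero]; exact (hh_pos O x hf).2 ⟨_, _, s0, s1, bQ'⟩)
  obtain ⟨F', hF'⟩ := (ww_pos O x hf).1 wb7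
  obtain ⟨Ft, hFt⟩ := (ww_pos O x hf).1 wb2
  have mG : G ∈ I O x hf v := by
    have := wedge_in2 O x hf hG s0 s1.le
    rwa [i62, show a + s • O.e m = v by rw [hadef]; module] at this
  have mG' : G' ∈ I O x hf v := by
    have := wedge_in1 O x hf hG' (s := 1 - s) (by linarith) (by linarith)
    rwa [i31, show a' + (1 - s) • O.e (m+4) = v by rw [hadef', O.e4]; module] at this
  have mF : Ft ∈ I O x hf v := by
    have := wedge_in2 O x hf hFt one_pos le_rfl
    rwa [i24, show b' + (1:ℝ) • O.e (m+4) = v by rw [hb', O.e4]; module] at this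
  have mF' : F' ∈ I O x hf v := by
    have := wedge_in1 O x hf hF' one_pos le_rfl
    rwa [i71, show b + (1:ℝ) • O.e m = v by rw [hb]; module] at this
  rw [O.p6, hadef] at hG
  rw [O.p3, hadef'] at hG'
  rw [O.p2, hb'] at hFt
  rw [O.p7, hb] at hF'
  obtain ⟨d01, d02, d03, d12, d13, d23⟩ := O.dd m
  have n1 : G ≠ G' := by
    rintro rfl
    have : O.e (m+3) = O.e (m+1) := by linear_combination (norm := module) hG' - hG
    rw [this, cr_self] at d13
    exact lt_irrefl _ d13
  have n2 : F' ≠ G := by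
    rintro rfl
    have : O.e (m+2) = (1 - s) • O.e m := by linear_combination (norm := module) hF' - hG
    rw [this, cr_smul_right, cr_self, mul_zero] at d02
    exact lt_irrefl _ d02
  have n3 : Ft ≠ G' := by
    rintro rfl
    have : O.e (m+2) = (-s) • O.e m := by linear_combination (norm := module) hFt - hG'
    rw [this, cr_smul_right, cr_self, mul_zero] at d02
    exact lt_irrefl _ d02
  have two : I O x hf v = {G, G'} := by
    symm
    apply Finset.eq_of_subset_of_card_le
    · intro t h
      simp only [Finset.mem_insert, Finset.mem_singleton] at h
      rcases h with rfl | rfl <;> assumption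
    · rw [Finset.card_pair n1]; omega
  rw [two] at mF mF'
  simp only [Finset.mem_insert, Finset.mem_singleton] at mF mF'
  have q1 : Ft = G := by tauto
  have q2 : F' = G' := by tauto
  subst q1 q2
  have : O.e (m+2) = ((1 - 2 * s)/2) • O.e m := by
    linear_combination (norm := module) (1/2:ℝ) • (hFt - hG) + (1/2:ℝ) • (hF' - hG')
  rw [this, cr_smul_right, cr_self, mul_zero] at d02
  exact lt_irrefl _ d02
end final

theorem decomp (a b z : ℝ × ℝ) : cr a b • z = (-cr b z) • a + cr a z • b := by
  ext <;> simp [cr] <;> ring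

theorem mkOct (P : Set (ℝ × ℝ)) (c : ℝ × ℝ) (u : Fin 8 → ℝ × ℝ) (hu : ∀ i, u (i+4) = - u i)
    (s1 : ∀ i, 0 < cr (u i) (u (i+1)))
    (t1 : ∀ i, 0 < cr (u (i+1) - u i) (u (i+2) - u (i+1)))
    (t2 : ∀ i, 0 < cr (u (i+1) - u i) (u (i+3) - u (i+1)))
    (hP : P = convexHull ℝ (Set.range fun i => c + u i)) : Nonempty (Oct P) := by
  have hu5 : ∀ i, u (i+5) = - u (i+1) := fun i => by rw [← hu, add_assoc]; rfl
  have hu6 : ∀ i, u (i+6) = - u (i+2) := fun i => by rw [← hu, add_assoc]; rfl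
  have hu7 : ∀ i, u (i+7) = - u (i+3) := fun i => by rw [← hu, add_assoc]; rfl
  have D1 : ∀ i, 0 < cr (u (i+1) - u i) (u (i+1+1) - u (i+1)) := fun i => by
    have := t1 i
    rwa [show i + 1 + 1 = i + 2 from (by decide : ∀ i : Fin 8, i + 1 + 1 = i + 2) i]
  have D3 : ∀ i, 0 < cr (u (i+1) - u i) (u (i+3+1) - u (i+3)) := fun i => by
    have := t1 (i+3)
    rw [show i + 3 + 1 = i + 4 from (by decide : ∀ i : Fin 8, i + 3 + 1 = i + 4) i,
      show i + 3 + 2 = i + 5 from (by decide : ∀ i : Fin 8, i + 3 + 2 = i + 5) i, hu, hu5] at this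
    rw [show i + 3 + 1 = i + 4 from (by decide : ∀ i : Fin 8, i + 3 + 1 = i + 4) i, hu]
    simp only [cr, Prod.fst_add, Prod.snd_add, Prod.fst_neg, Prod.snd_neg, Prod.fst_sub,
      Prod.snd_sub] at *
    linarith
  have D2 : ∀ i, 0 < cr (u (i+1) - u i) (u (i+2+1) - u (i+2)) := fun i => by
    have a0 := t2 i
    have a1 := t2 (i+1)
    have a2 := t2 (i+2)
    have a3 := t2 (i+3)
    have b0 := t1 i
    have b1 := t1 (i+1)
    have b2 := t1 (i+2)
    have b3 := t1 (i+3)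
    simp only [add_assoc] at *
    simp only [show (1 + 1 : Fin 8) = 2 from rfl, show (1 + 2 : Fin 8) = 3 from rfl,
      show (1 + 3 : Fin 8) = 4 from rfl, show (2 + 1 : Fin 8) = 3 from rfl,
      show (2 + 2 : Fin 8) = 4 from rfl, show (2 + 3 : Fin 8) = 5 from rfl,
      show (3 + 1 : Fin 8) = 4 from rfl, show (3 + 2 : Fin 8) = 5 from rfl,
      show (3 + 3 : Fin 8) = 6 from rfl] at *
    rw [hu] at a1 b2 b3 a3
    rw [hu5] at a2 b3
    rw [hu6] at a3
    set e0 := u (i+1) - u i with he0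
    set e1 := u (i+2) - u (i+1) with he1
    set e2 := u (i+3) - u (i+2) with he2
    set e3 := -u i - u (i+3) with he3
    have A0 : 0 < cr e0 e1 + cr e0 e2 := by
      rw [← cr_add_right]; convert a0 using 2; rw [he1, he2]; abel
    have A1 : 0 < cr e1 e2 + cr e1 e3 := by
      rw [← cr_add_right]; convert a1 using 2; rw [he2, he3]; abel
    have A2 : 0 < cr e2 e3 + cr e0 e2 := by
      rw [cr_swap e0, ← cr_neg_right, ← cr_add_right]; convert a2 using 2; rw [he0, he3]; abel
    have A3 : 0 < cr e0 e3 + cr e1 e3 := by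
      rw [cr_swap e0, cr_swap e1, ← cr_neg_right, ← cr_neg_right, ← cr_add_right]
      convert a3 using 2; rw [he0, he1]; abel
    have B3 : 0 < cr e0 e3 := by
      rw [cr_swap, ← cr_neg_right]; convert b3 using 2; rw [he0]; abel
    have pl : cr e0 e2 * cr e1 e3 = cr e0 e1 * cr e2 e3 + cr e0 e3 * cr e1 e2 := by
      simp only [cr]; ring
    clear_value e0 e1 e2 e3
    by_contra hn
    push Not at hn
    generalize cr e0 e1 = d01 at *
    generalize cr e0 e2 = d02 at *
    generalize cr e0 e3 = d03 at *
    generalize cr e1 e2 = d12 at *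
    generalize cr e1 e3 = d13 at *
    generalize cr e2 e3 = d23 at *
    have p0 : 0 < d01 * d23 := mul_pos b0 b2
    have p1 : 0 < d03 * d12 := mul_pos B3 b1
    have hpos : 0 < d02 * d13 := by linarith
    have h13 : d13 < 0 := by
      by_contra hc
      push Not at hc
      nlinarith [mul_nonneg (neg_nonneg.2 hn) hc]
    have q0 : (-d02) * (-d02) ≤ d01 * d23 :=
      mul_le_mul (by linarith) (by linarith) (by linarith) b0.le
    have q1 : (-d13) * (-d13) ≤ d03 * d12 :=
      mul_le_mul (by linarith) (by linarith) (by linarith) B3.le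
    nlinarith [sq_nonneg (d02 - d13)]
  have hconv : Convex ℝ P := hP ▸ convex_convexHull ℝ _
  have hmem : ∀ i, c + u i ∈ P := fun i => by
    rw [hP]; exact subset_convexHull ℝ _ ⟨i, rfl⟩
  have hc : c ∈ P := by
    have := hconv (hmem 0) (hmem 4) (a := 1/2) (b := 1/2) (by norm_num) (by norm_num) (by norm_num)
    have h4 : u 4 = - u 0 := hu 0
    rw [h4] at this
    convert this using 1
    module
  refine ⟨⟨fun i => u (i+1) - u i, fun i => c + u i, ?_, ?_, D1, D2, D3, ?_, ?_⟩⟩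
  · intro i
    show u (i+4+1) - u (i+4) = _
    rw [show i + 4 + 1 = i + 5 from (by decide : ∀ i : Fin 8, i + 4 + 1 = i + 5) i, hu, hu5]; abel
  · intro i
    show c + u (i+1) = _
    abel
  · intro y
    constructor
    · intro hy l
      have hcv : Convex ℝ {y | 0 ≤ cr (u (l+1) - u l) (y - (c + u l))} := by
        intro y1 h1 y2 h2 α β hα hβ hαβ
        simp only [Set.mem_ofPred_eq] at *
        have : cr (u (l+1) - u l) (α • y1 + β • y2 - (c + u l)) =
          α * cr (u (l+1) - u l) (y1 - (c + u l)) + β * cr (u (l+1) - u l) (y2 - (c + u l)) := by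
          rw [← cr_smul_right, ← cr_smul_right, ← cr_add_right]
          congr 1
          have : β = 1 - α := by linarith
          subst this
          module
        rw [this]
        positivity
      rw [hP] at hy
      refine convexHull_min ?_ hcv hy
      rintro _ ⟨m, rfl⟩
      have a1 := D1 l
      have a2 := D2 l
      have a3 := D3 l
      simp only [add_assoc] at a1 a2 a3
      simp only [show (1 + 1 : Fin 8) = 2 from rfl, show (2 + 1 : Fin 8) = 3 from rfl,
        show (3 + 1 : Fin 8) = 4 from rfl, hu] at a1 a2 a3
      show 0 ≤ cr (u (l+1) - u l) (c + u m - (c + u l))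
      simp only [cr, Prod.fst_add, Prod.snd_add, Prod.fst_neg, Prod.snd_neg, Prod.fst_sub,
        Prod.snd_sub] at a1 a2 a3
      rcases Oct.ind m l with h | h | h | h | h | h | h | h <;> rw [h] <;>
      simp only [hu, hu5, hu6, hu7, cr, Prod.fst_add, Prod.snd_add, Prod.fst_neg, Prod.snd_neg, Prod.fst_sub,
        Prod.snd_sub] <;> linarith
    · intro h
      have key : ∀ i, 0 ≤ cr (u i) (y - c) → cr (u (i+1)) (y - c) ≤ 0 → y ∈ P := by
        intro i h1 h2
        have hD := s1 i
        have hg : 0 ≤ cr (u (i+1) - u i) (y - (c + u i)) := h i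
        have hz := decomp (u i) (u (i+1)) (y - c)
        set D := cr (u i) (u (i+1)) with hDd
        set A := cr (u i) (y - c) with hA
        set B := cr (u (i+1)) (y - c) with hB
        have hg' : 0 ≤ B - A + D := by
          convert hg using 1
          rw [hA, hB, hDd]
          simp only [cr, Prod.fst_add, Prod.snd_add, Prod.fst_sub, Prod.snd_sub]
          ring
        have := hconv.sum_mem (t := Finset.univ) (w := ![(B - A + D)/D, -B/D, A/D])
          (z := ![c, c + u i, c + u (i+1)]) (by
            intro j _
            fin_cases j
            · exact div_nonneg hg' hD.le
            · exact div_nonneg (by linarith) hD.le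
            · exact div_nonneg h1 hD.le) (by
            rw [Fin.sum_univ_three]
            simp
            field_simp
            ring) (by
            intro j _
            fin_cases j
            · exact hc
            · exact hmem _
            · exact hmem _)
        rw [Fin.sum_univ_three] at this
        simp only [Matrix.cons_val] at this
        convert this using 1
        have hy : y = c + D⁻¹ • (D • (y - c)) := by
          rw [smul_smul, inv_mul_cancel₀ hD.ne', one_smul]; abel
        rw [hz] at hy
        rw [hy]
        have e1 : (B - A + D) / D = 1 - (-B)/D - A/D := by field_simp; ring
        rw [e1]
        rw [smul_add, smul_smul, smul_smul, div_eq_inv_mul, div_eq_inv_mul]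
        module
      have n4 : cr (u 4) (y - c) = - cr (u 0) (y - c) := by
        rw [← cr_neg_left]; congr 1; exact hu 0
      have n5 : cr (u 5) (y - c) = - cr (u 1) (y - c) := by
        rw [← cr_neg_left]; congr 1; exact hu 1
      have n6 : cr (u 6) (y - c) = - cr (u 2) (y - c) := by
        rw [← cr_neg_left]; congr 1; exact hu 2
      have n7 : cr (u 7) (y - c) = - cr (u 3) (y - c) := by
        rw [← cr_neg_left]; congr 1; exact hu 3
      have k0 := key 0
      have k1 := key 1
      have k2 := key 2
      have k3 := key 3
      have k4 := key 4
      have k5 := key 5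
      have k6 := key 6
      have k7 := key 7
      simp only [show (0 + 1 : Fin 8) = 1 from rfl, show (1 + 1 : Fin 8) = 2 from rfl,
        show (2 + 1 : Fin 8) = 3 from rfl,
        show (3 + 1 : Fin 8) = 4 from rfl, show (4 + 1 : Fin 8) = 5 from rfl,
        show (5 + 1 : Fin 8) = 6 from rfl, show (6 + 1 : Fin 8) = 7 from rfl,
        show (7 + 1 : Fin 8) = 0 from rfl, n4, n5, n6, n7] at *
      by_contra hy
      simp only [hy, imp_false, not_le] at *
      rcases le_total 0 (cr (u 0) (y - c)) with z0 | z0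
      · have z1 := k0 z0
        have z2 := k1 z1.le
        have z3 := k2 z2.le
        have z4 := k3 z3.le
        linarith
      · have z1 := k4 (by linarith)
        have z2 := k5 (by linarith)
        have z3 := k6 (by linarith)
        have z4 := k7 (by linarith)
        linarith
  · have : Bornology.IsBounded P := by
      rw [hP, isBounded_convexHull]
      exact (Set.finite_range _).isBounded
    obtain ⟨R, hR⟩ := this.exists_norm_le
    exact ⟨R, hR⟩

section construct
variable {K : Set (ℝ × ℝ)} {U : Finset (ℝ × ℝ)}

theorem triple (hK0 : ∀ y ∈ K, ∀ t : ℝ, 0 ≤ t → t ≤ 1 → t • y ∈ K)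
    (hUK : ∀ u ∈ U, u ∈ K)
    (hext : ∀ u ∈ U, ∀ y ∈ K, ∀ z ∈ K, ∀ α : ℝ, 0 < α → α < 1 → u = α • y + (1 - α) • z → y = u)
    {a b d : ℝ × ℝ} (ha : a ∈ U) (hb : b ∈ U) (hd : d ∈ U) (hab : 0 < cr a b) (hbd : 0 < cr b d)
    (had : 0 < cr a d) : 0 < cr (b - a) (d - b) := by
  have e : cr (b - a) (d - b) = cr b d - cr a d + cr a b := by
    simp only [cr, Prod.fst_sub, Prod.snd_sub]; ring
  by_contra hn
  push Not at hn
  rw [e] at hn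
  have hz := decomp a d b
  have hα1 : cr b d / cr a d < 1 := by rw [div_lt_one had]; linarith
  have hne : 1 - cr b d / cr a d ≠ 0 := by linarith
  have key := hext b hb a (hUK a ha) _ (hK0 d (hUK d hd) ((cr a b / cr a d) / (1 - cr b d / cr a d))
    (div_nonneg (div_nonneg hab.le had.le) (by linarith)) (by
      rw [div_le_one (by linarith), div_le_iff₀ had, sub_mul, div_mul_cancel₀ _ had.ne']
      linarith)) (cr b d / cr a d) (div_pos hbd had) hα1 (by
      rw [smul_smul, mul_div_cancel₀ _ hne]
      have : b = (cr a d)⁻¹ • (cr a d • b) := by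
        rw [smul_smul, inv_mul_cancel₀ had.ne', one_smul]
      rw [hz, cr_swap d b] at this
      nth_rewrite 1 [this]
      rw [smul_add, smul_smul, smul_smul, div_eq_inv_mul, div_eq_inv_mul, neg_neg])
  rw [key, cr_self] at hab
  exact lt_irrefl _ hab

theorem par_pos (h0 : (0 : ℝ × ℝ) ∈ K)
    (hUK : ∀ u ∈ U, u ∈ K)
    (hext : ∀ u ∈ U, ∀ y ∈ K, ∀ z ∈ K, ∀ α : ℝ, 0 < α → α < 1 → u = α • y + (1 - α) • z → y = u)
    {a b : ℝ × ℝ} (ha : a ∈ U) (hb : b ∈ U) {t : ℝ} (ht : 0 < t) (h : b = t • a) : a = b := by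
  rcases lt_trichotomy t 1 with h1 | h1 | h1
  · exact hext b hb a (hUK a ha) 0 h0 t ht h1 (by rw [h]; simp)
  · rw [h, h1, one_smul]
  · refine (hext a ha b (hUK b hb) 0 h0 t⁻¹ (by positivity) (inv_lt_one_of_one_lt₀ h1) ?_).symm
    rw [h, smul_smul, inv_mul_cancel₀ ht.ne']; simp

theorem sort3 (z a b c : ℝ × ℝ) (ha : 0 < cr z a) (hb : 0 < cr z b) (hc : 0 < cr z c)
    (hab : cr a b ≠ 0) (hbc : cr b c ≠ 0) (hac : cr a c ≠ 0) :
    ∃ a' b' c', (∀ y, (y = a ∨ y = b ∨ y = c) ↔ (y = a' ∨ y = b' ∨ y = c')) ∧ 0 < cr a' b' ∧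
      0 < cr b' c' ∧ 0 < cr a' c' := by
  have id : cr z b * cr a c = cr z a * cr b c + cr z c * cr a b := by simp only [cr]; ring
  have sab := cr_swap a b
  have sbc := cr_swap b c
  have sac := cr_swap a c
  rcases lt_or_gt_of_ne hab with h1 | h1 <;> rcases lt_or_gt_of_ne hbc with h2 | h2 <;>
    rcases lt_or_gt_of_ne hac with h3 | h3
  · exact ⟨c, b, a, by intro y; tauto, by linarith, by linarith, by linarith⟩
  · exfalso; nlinarith [mul_pos hb h3, mul_pos ha (neg_pos.2 h2), mul_pos hc (neg_pos.2 h1)]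
  · exact ⟨b, c, a, by intro y; tauto, by linarith, by linarith, by linarith⟩
  · exact ⟨b, a, c, by intro y; tauto, by linarith, by linarith, by linarith⟩
  · exact ⟨c, a, b, by intro y; tauto, by linarith, by linarith, by linarith⟩
  · exact ⟨a, c, b, by intro y; tauto, by linarith, by linarith, by linarith⟩
  · exfalso; nlinarith [mul_pos hb (neg_pos.2 h3), mul_pos ha h2, mul_pos hc h1]
  · exact ⟨a, b, c, by intro y; tauto, by linarith, by linarith, by linarith⟩

theorem or_shuffle (A B C D E F G H : Prop) :
    (((A ∨ B ∨ C) ∨ (D ∨ E)) ∨ (F ∨ G ∨ H)) ↔ (D ∨ A ∨ B ∨ C ∨ E ∨ F ∨ G ∨ H) := by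
  grind

theorem arrange (hcard : U.card = 8) (hneg : ∀ u ∈ U, -u ∈ U) (h0 : (0 : ℝ × ℝ) ∈ K)
    (hUK : ∀ u ∈ U, u ∈ K)
    (hext : ∀ u ∈ U, ∀ y ∈ K, ∀ z ∈ K, ∀ α : ℝ, 0 < α → α < 1 → u = α • y + (1 - α) • z → y = u) :
    ∃ u0 u1 u2 u3, (∀ u, u ∈ U ↔ (u = u0 ∨ u = u1 ∨ u = u2 ∨ u = u3 ∨ u = -u0 ∨ u = -u1 ∨ u = -u2 ∨ u = -u3)) ∧
      0 < cr u0 u1 ∧ 0 < cr u0 u2 ∧ 0 < cr u0 u3 ∧ 0 < cr u1 u2 ∧ 0 < cr u2 u3 ∧ 0 < cr u1 u3 := by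
  classical
  have hz : (0 : ℝ × ℝ) ∉ U := by
    intro hz
    obtain ⟨u, hu, hne⟩ := Finset.exists_mem_ne (by omega : 1 < U.card) (0 : ℝ × ℝ)
    exact hne (hext 0 hz u (hUK u hu) (-u) (hUK _ (hneg u hu)) (1/2) (by norm_num) (by norm_num)
      (by module))
  have par : ∀ a ∈ U, ∀ b ∈ U, cr a b = 0 → b = a ∨ b = -a := by
    intro a ha b hb h
    have hane : a ≠ 0 := fun h => hz (h ▸ ha)
    obtain ⟨t, ht⟩ := Oct.onLine h hane
    rcases lt_trichotomy t 0 with h1 | h1 | h1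
    · right
      have := par_pos h0 hUK hext ha (hneg b hb) (t := -t) (by linarith) (by rw [ht]; module)
      rw [this, neg_neg]
    · rw [h1, zero_smul] at ht
      exact absurd (ht ▸ hb) hz
    · left
      exact (par_pos h0 hUK hext ha hb h1 ht).symm
  obtain ⟨u0, hu0⟩ := Finset.card_pos.1 (by omega : 0 < U.card)
  set H := U.filter fun u => 0 < cr u0 u with hH
  have c0 : (U.filter fun u => cr u0 u = 0) = {u0, -u0} := by
    ext u
    simp only [Finset.mem_filter, Finset.mem_insert, Finset.mem_singleton]
    constructor
    · rintro ⟨h1, h2⟩; exact par u0 hu0 u h1 h2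
    · rintro (rfl | rfl)
      · exact ⟨hu0, cr_self _⟩
      · exact ⟨hneg _ hu0, by rw [cr_neg_right, cr_self, neg_zero]⟩
  have hne0 : u0 ≠ -u0 := by
    intro h
    have : u0 = 0 := self_eq_neg.1 h
    exact hz (this ▸ hu0)
  have cn : (U.filter fun u => cr u0 u < 0) = H.image fun u => -u := by
    ext u
    simp only [hH, Finset.mem_filter, Finset.mem_image]
    constructor
    · rintro ⟨h1, h2⟩
      exact ⟨-u, ⟨hneg u h1, by rw [cr_neg_right]; linarith⟩, neg_neg u⟩
    · rintro ⟨w, ⟨h1, h2⟩, rfl⟩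
      exact ⟨hneg w h1, by rw [cr_neg_right]; linarith⟩
  have hUeq : U = H ∪ (U.filter fun u => cr u0 u = 0) ∪ (U.filter fun u => cr u0 u < 0) := by
    ext u
    simp only [hH, Finset.mem_union, Finset.mem_filter]
    rcases lt_trichotomy (cr u0 u) 0 with h | h | h <;> tauto
  have hd1 : Disjoint H (U.filter fun u => cr u0 u = 0) := by
    rw [Finset.disjoint_left]
    intro u h1 h2
    rw [Finset.mem_filter] at h1 h2
    linarith [h1.2, h2.2]
  have hd2 : Disjoint (H ∪ (U.filter fun u => cr u0 u = 0)) (U.filter fun u => cr u0 u < 0) := by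
    rw [Finset.disjoint_left]
    intro u h1 h2
    rw [Finset.mem_union, Finset.mem_filter, Finset.mem_filter] at h1
    rw [Finset.mem_filter] at h2
    rcases h1 with h1 | h1 <;> linarith [h1.2, h2.2]
  have hcd := congrArg Finset.card hUeq
  rw [Finset.card_union_of_disjoint hd2, Finset.card_union_of_disjoint hd1, cn, c0,
    Finset.card_pair hne0, Finset.card_image_of_injective _ neg_injective, hcard] at hcd
  obtain ⟨a, b, c, nab, nac, nbc, hHe⟩ := Finset.card_eq_three.1 (by omega : H.card = 3)
  have hHm : ∀ u, u ∈ H ↔ (u = a ∨ u = b ∨ u = c) := fun u => by rw [hHe]; simp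
  have mm : ∀ u, u ∈ H → u ∈ U ∧ 0 < cr u0 u := fun u hu => by
    rw [hH, Finset.mem_filter] at hu; exact hu
  obtain ⟨ma, pa⟩ := mm a ((hHm a).2 (by tauto))
  obtain ⟨mb, pb⟩ := mm b ((hHm b).2 (by tauto))
  obtain ⟨mc, pc⟩ := mm c ((hHm c).2 (by tauto))
  have nz : ∀ a ∈ U, ∀ b ∈ U, 0 < cr u0 a → 0 < cr u0 b → a ≠ b → cr a b ≠ 0 := by
    intro a ha b hb pa pb hab h
    rcases par a ha b hb h with h | h
    · exact hab h.symm
    · rw [h, cr_neg_right] at pb; linarith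
  obtain ⟨a', b', c', hs, q1, q2, q3⟩ := sort3 u0 a b c pa pb pc (nz a ma b mb pa pb nab)
    (nz b mb c mc pb pc nbc) (nz a ma c mc pa pc nac)
  have hHm' : ∀ u, u ∈ H ↔ (u = a' ∨ u = b' ∨ u = c') := fun u => by rw [hHm, hs]
  refine ⟨u0, a', b', c', ?_, (mm a' ((hHm' _).2 (by tauto))).2, (mm b' ((hHm' _).2 (by tauto))).2,
    (mm c' ((hHm' _).2 (by tauto))).2, q1, q2, q3⟩
  intro u
  rw [hUeq, cn, c0]
  simp only [Finset.mem_union, Finset.mem_image, Finset.mem_insert, Finset.mem_singleton, hHm']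
  have : (∃ w, (w = a' ∨ w = b' ∨ w = c') ∧ -w = u) ↔ (u = -a' ∨ u = -b' ∨ u = -c') := by
    constructor
    · rintro ⟨w, rfl | rfl | rfl, rfl⟩ <;> simp
    · rintro (rfl | rfl | rfl)
      · exact ⟨a', by simp⟩
      · exact ⟨b', by simp⟩
      · exact ⟨c', by simp⟩
  rw [this]
  exact or_shuffle _ _ _ _ _ _ _ _

end construct

theorem exists_oct (P : Set (ℝ × ℝ)) (V : Finset (ℝ × ℝ))
    (hP : IsConvexPolygon P V) (hV : V.card = 8) (hsym : IsCentrallySymmetric P) :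
    Nonempty (Oct P) := by
  classical
  obtain ⟨hP, hE, -⟩ := hP
  obtain ⟨c, hc⟩ := hsym
  have hconv : Convex ℝ P := hP ▸ convex_convexHull ℝ _
  have hVP : ∀ v ∈ V, v ∈ P := fun v hv => (hE v hv).1
  have hrefl : ∀ y, 2 • c - (2 • c - y) = y := fun y => by abel
  have hext1 : ∀ v ∈ V, ∀ y ∈ P, ∀ z ∈ P, ∀ α : ℝ, 0 < α → α < 1 → v = α • y + (1 - α) • z → y = v := by
    intro v hv y hy z hz α h0 h1 he
    have := (hE v hv)
    rw [mem_extremePoints] at this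
    exact (this.2 y hy z hz ⟨α, 1 - α, h0, by linarith, by ring, he.symm⟩).1
  have hVs : ∀ v ∈ V, 2 • c - v ∈ V := by
    intro v hv
    have : 2 • c - v ∈ Set.extremePoints ℝ P := by
      rw [mem_extremePoints_iff_left]
      refine ⟨hc v (hVP v hv), ?_⟩
      rintro y hy z hz ⟨α, β, h0, h1, hs, he⟩
      have : β = 1 - α := by linarith
      subst this
      have := hext1 v hv _ (hc y hy) _ (hc z hz) α h0 (by linarith) (by
        linear_combination (norm := module) he)
      rw [← this, hrefl]
    rw [hP] at this
    exact_mod_cast extremePoints_convexHull_subset this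
  set K : Set (ℝ × ℝ) := {z | c + z ∈ P} with hK
  set U : Finset (ℝ × ℝ) := V.image fun v => v - c with hU
  have mK : ∀ z, z ∈ K ↔ c + z ∈ P := fun z => Iff.rfl
  have mU : ∀ u, u ∈ U ↔ c + u ∈ V := by
    intro u
    rw [hU, Finset.mem_image]
    constructor
    · rintro ⟨v, hv, rfl⟩; simpa using hv
    · intro h; exact ⟨_, h, by abel⟩
  have hUc : U.card = 8 := by
    rw [hU, Finset.card_image_of_injective _ (sub_left_injective), hV]
  have hneg : ∀ u ∈ U, -u ∈ U := by
    intro u hu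
    rw [mU] at *
    convert hVs _ hu using 1
    module
  have hUK : ∀ u ∈ U, u ∈ K := fun u hu => hVP _ ((mU u).1 hu)
  have h0K : (0 : ℝ × ℝ) ∈ K := by
    obtain ⟨u, hu⟩ := Finset.card_pos.1 (by omega : 0 < U.card)
    rw [mK]
    convert hconv (hUK u hu) (hUK _ (hneg u hu)) (a := 1/2) (b := 1/2) (by norm_num) (by norm_num)
      (by norm_num) using 1
    module
  have hKstar : ∀ y ∈ K, ∀ t : ℝ, 0 ≤ t → t ≤ 1 → t • y ∈ K := by
    intro y hy t h0 h1
    rw [mK] at *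
    convert hconv hy h0K (a := t) (b := 1 - t) h0 (by linarith) (by ring) using 1
    module
  have hext : ∀ u ∈ U, ∀ y ∈ K, ∀ z ∈ K, ∀ α : ℝ, 0 < α → α < 1 → u = α • y + (1 - α) • z → y = u := by
    intro u hu y hy z hz α h0 h1 he
    have := hext1 _ ((mU u).1 hu) _ hy _ hz α h0 h1 (by rw [he]; module)
    exact add_left_cancel this
  obtain ⟨u0, u1, u2, u3, hall, p01, p02, p03, p12, p23, p13⟩ := arrange hUc hneg h0K hUK hext
  set u : Fin 8 → ℝ × ℝ := ![u0, u1, u2, u3, -u0, -u1, -u2, -u3] with hu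
  have huU : ∀ i, u i ∈ U := by
    intro i
    rw [hall]
    fin_cases i <;> simp [hu]
  have hu4 : ∀ i, u (i+4) = - u i := by
    intro i
    fin_cases i <;> simp [hu]
  have s1 : ∀ i, 0 < cr (u i) (u (i+1)) := by
    intro i
    fin_cases i <;> simp [hu, cr_neg_left, cr_neg_right] <;>
      first | assumption | (rw [cr_swap]; linarith)
  have s2 : ∀ i, 0 < cr (u i) (u (i+2)) := by
    intro i
    fin_cases i <;> simp [hu, cr_neg_left, cr_neg_right] <;>
      first | assumption | (rw [cr_swap]; linarith)
  have s3 : ∀ i, 0 < cr (u i) (u (i+3)) := by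
    intro i
    fin_cases i <;> simp [hu, cr_neg_left, cr_neg_right] <;>
      first | assumption | (rw [cr_swap]; linarith)
  have i11 : ∀ i : Fin 8, i + 1 + 1 = i + 2 := by decide
  have i12 : ∀ i : Fin 8, i + 1 + 2 = i + 3 := by decide
  refine mkOct P c u hu4 s1 ?_ ?_ ?_
  · intro i
    have := s1 (i+1)
    rw [i11] at this
    exact triple hKstar hUK hext (huU _) (huU _) (huU _) (s1 i) this (s2 i)
  · intro i
    have := s2 (i+1)
    rw [i12] at this
    exact triple hKstar hUK hext (huU _) (huU _) (huU _) (s1 i) this (s3 i)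
  · rw [hP]
    congr 1
    ext y
    have : y ∈ (V : Set (ℝ × ℝ)) ↔ y - c ∈ U := by rw [mU]; simp
    rw [this]
    constructor
    · intro h
      have hy : ∀ i, y - c = u i → y ∈ Set.range fun i => c + u i := fun i h => ⟨i, by
        show c + u i = y
        rw [← h]; abel⟩
      rcases (hall _).1 h with h | h | h | h | h | h | h | h
      · exact hy 0 h
      · exact hy 1 h
      · exact hy 2 h
      · exact hy 3 h
      · exact hy 4 h
      · exact hy 5 h
      · exact hy 6 h
      · exact hy 7 h
    · rintro ⟨i, rfl⟩
      simpa using huU i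

/-- If a centrally symmetric convex octagon (a convex polygon with exactly 8 vertices,
symmetric about a point) admits a `k`-fold translative tiling of the plane, then
`k ≥ 5`; that is, `τ(P) ≥ 5`. -/
theorem tau_octagon_ge (P : Set (ℝ × ℝ)) (V : Finset (ℝ × ℝ))
    (hP : IsConvexPolygon P V) (hV : V.card = 8) (hsym : IsCentrallySymmetric P)
    (k : ℕ) (hk : 0 < k) (ι : Type) (x : ι → ℝ × ℝ)
    (htile : IsKFoldTranslativeTiling P x k) :
    5 ≤ k := by
  by_contra hk5
  obtain ⟨O⟩ := exists_oct P V hP hV hsym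
  have hf : ∀ v, {t | v - x t ∈ P}.Finite := by
    intro v
    obtain ⟨R, hR⟩ := O.bdd
    refine (htile.1 (‖v‖ + R)).subset ?_
    intro t ht
    have h1 := hR _ ht
    have : x t = v - (v - x t) := by abel
    show ‖x t‖ ≤ ‖v‖ + R
    rw [this]
    exact (norm_sub_le _ _).trans (by linarith)
  exact contra O x hf hk htile (by omega)
end
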